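/- arXiv:1307.6540 — 3 statements merged into one kernel-verified Lean document; each statement's English description precedes it below -/
import Mathlib

section
/- Let d = 3 and c(x,y) = 1/|x−y| (the Coulomb cost). Let μ be a Borel probability measure on ℝ³ with ∫∫ dμ(x) dμ(y)/|x−y| < ∞. Then the independent product measure γ₀ = μ^⊗∞ on (ℝ³)^ℕ is the unique minimizer of C_∞ over all γ ∈ P_sym^∞(ℝ³) with γ ↦ μ, and F_∞^OT[μ] = ∫∫ dμ(x) dμ(y)/|x−y|. -/
open MeasureTheory ENNReal Filter Topology ProbabilityTheory

noncomputable section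

/-- `ℝ^d` with the Euclidean norm. -/
abbrev Ed (d : ℕ) := EuclideanSpace ℝ (Fin d)

/-- A Borel probability measure on the countable product `(ℝ^d)^ℕ` is *exchangeable*
(symmetric) if it is invariant under every finite permutation of the coordinates. -/
def IsExchangeable {d : ℕ} (γ : Measure (ℕ → Ed d)) : Prop :=
  ∀ σ : Equiv.Perm ℕ, {n : ℕ | σ n ≠ n}.Finite →
    γ.map (fun x n => x (σ n)) = γ

/-- `γ ↦ μ` : the pushforward of `γ` under every coordinate projection is `μ`. -/
def HasMarginal {d : ℕ} (γ : Measure (ℕ → Ed d)) (μ : Measure (Ed d)) : Prop :=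
  ∀ n : ℕ, γ.map (fun x => x n) = μ

/-- The infinite-body cost `C_∞[γ] = ∫ c(x₁,x₂) dγ`. -/
def Cinf {d : ℕ} (c : Ed d → Ed d → ℝ≥0∞) (γ : Measure (ℕ → Ed d)) : ℝ≥0∞ :=
  ∫⁻ x, c (x 0) (x 1) ∂γ

/-- The optimal cost of the infinite-body optimal transport problem,
`F_∞^OT[μ] = inf { C_∞[γ] : γ ∈ P_sym^∞(ℝ^d), γ ↦ μ }`. -/
def FinfOT {d : ℕ} (c : Ed d → Ed d → ℝ≥0∞) (μ : Measure (Ed d)) : ℝ≥0∞ :=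
  ⨅ (γ : Measure (ℕ → Ed d)) (_ : IsProbabilityMeasure γ) (_ : IsExchangeable γ)
    (_ : HasMarginal γ μ), Cinf c γ

/-- `γ` is the infinite product measure `μ^⊗∞` on `(ℝ^d)^ℕ`, characterized by its
finite-dimensional marginals being the finite products `μ^⊗n`. -/
def IsInfiniteProduct {d : ℕ} (γ : Measure (ℕ → Ed d)) (μ : Measure (Ed d)) : Prop :=
  ∀ n : ℕ, γ.map (fun x (i : Fin n) => x i.val) = Measure.pi (fun _ : Fin n => μ)

/-- The Coulomb cost `1/|x-y|` with values in `[0,∞]` (equal to `∞` on the diagonal). -/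
def coulomb {d : ℕ} (x y : Ed d) : ℝ≥0∞ := (ENNReal.ofReal (dist x y))⁻¹

/-!
The Coulomb cost is a superposition of squares: by the Gaussian integrals
`1 / r = π^(-1/2) ∫ exp (-s² r²) ds` and
`exp (-s² |x - y|²) = C(s) ∫ exp (-2 s² |x - z|²) exp (-2 s² |y - z|²) dz`, it is an integral of
products `k_p(x) k_p(y)` of Gaussian bumps with nonnegative weights. Hence, for `γ ↦ μ`,
the cost `C_∞[γ]` exceeds the mean-field energy of `μ` by the integral over `p` of the covariances
of `k_p(x₁)` and `k_p(x₂)` under `γ`. The variables `k_p(x₁), k_p(x₂), …` are exchangeable, so the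
variance of their averages converges to that common covariance, which is therefore nonnegative:
the product measure is optimal.

If `γ` is optimal, then almost all of these covariances vanish. The averages of the `k_p(xᵢ)` then
have vanishing variance, so by Cauchy–Schwarz every square-integrable function of finitely many
coordinates is uncorrelated with `k_p` of any other coordinate. As Gaussian convolution is injective
on finite measures, each coordinate is independent of any finite set of others, and `γ = μ^⊗∞`.
-/

section Equicorrelated

variable {Ω : Type*} {mΩ : MeasurableSpace Ω} {P : Measure Ω}

lemma sq_covariance_le_variance_mul_variance [IsFiniteMeasure P] {X Y : Ω → ℝ}
    (hX : MemLp X 2 P) (hY : MemLp Y 2 P) :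
    cov[X, Y; P] ^ 2 ≤ Var[X; P] * Var[Y; P] := by
  have variance_pencil (t : ℝ) :
      Var[t • X + Y; P] = Var[X; P] * (t * t) + 2 * cov[X, Y; P] * t + Var[Y; P] := by
    rw [variance_add (hX.const_smul t) hY, variance_smul, covariance_smul_left]
    ring
  have discrim_nonpos := discrim_le_zero fun t ↦ variance_pencil t ▸ variance_nonneg _ P
  rw [discrim] at discrim_nonpos
  linarith

variable [IsFiniteMeasure P] {Y : ℕ → Ω → ℝ} {v ρ : ℝ}

lemma tendsto_variance_sum_range_div_sq (hY : ∀ i, MemLp (Y i) 2 P)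
    (hvar : ∀ i, Var[Y i; P] = v) (hcov : ∀ i j, i ≠ j → cov[Y i, Y j; P] = ρ) :
    Tendsto (fun n : ℕ ↦ Var[∑ i ∈ Finset.range n, Y i; P] / (n : ℝ) ^ 2) atTop (𝓝 ρ) := by
  have row_sum (n i : ℕ) (hi : i ∈ Finset.range n) :
      ∑ j ∈ Finset.range n, cov[Y i, Y j; P] = (v - ρ) + n * ρ := by
    have entry (j : ℕ) : cov[Y i, Y j; P] = (if i = j then v - ρ else 0) + ρ := by
      split_ifs with hij
      · rw [← hij, covariance_self (hY i).aemeasurable, hvar, sub_add_cancel]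
      · rw [hcov i j hij, zero_add]
    simp [entry, Finset.sum_add_distrib, Finset.mem_range.1 hi]
  have variance_div (n : ℕ) (hn : n ≠ 0) :
      Var[∑ i ∈ Finset.range n, Y i; P] / (n : ℝ) ^ 2 = (v - ρ) / n + ρ := by
    rw [variance_sum' fun i _ ↦ hY i, Finset.sum_congr rfl (row_sum n), Finset.sum_const,
      Finset.card_range, nsmul_eq_mul]
    field_simp
  have limit := (tendsto_const_div_atTop_nhds_zero_nat (v - ρ)).add_const ρ
  rw [zero_add] at limit
  refine limit.congr' ?_
  filter_upwards [eventually_ne_atTop 0] with n hn using (variance_div n hn).symm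

lemma covariance_nonneg_of_equicorrelated (hY : ∀ i, MemLp (Y i) 2 P)
    (hvar : ∀ i, Var[Y i; P] = v) (hcov : ∀ i j, i ≠ j → cov[Y i, Y j; P] = ρ) : 0 ≤ ρ :=
  ge_of_tendsto' (tendsto_variance_sum_range_div_sq hY hvar hcov) fun n ↦
    div_nonneg (variance_nonneg _ P) (sq_nonneg (n : ℝ))

lemma sq_covariance_le_of_equicorrelated (hY : ∀ i, MemLp (Y i) 2 P)
    (hvar : ∀ i, Var[Y i; P] = v) (hcov : ∀ i j, i ≠ j → cov[Y i, Y j; P] = ρ)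
    {Z : Ω → ℝ} (hZ : MemLp Z 2 P) {a : ℝ} (hZY : ∀ i, cov[Z, Y i; P] = a) :
    a ^ 2 ≤ Var[Z; P] * ρ := by
  refine ge_of_tendsto ((tendsto_variance_sum_range_div_sq hY hvar hcov).const_mul Var[Z; P]) ?_
  filter_upwards [eventually_ne_atTop 0] with n hn
  have cauchy_schwarz := sq_covariance_le_variance_mul_variance hZ
    (memLp_finsetSum' (Finset.range n) fun i _ ↦ hY i)
  have covariance_sum : cov[Z, ∑ i ∈ Finset.range n, Y i; P] = n * a := by
    simp [covariance_sum_right' (fun i _ ↦ hY i) hZ, hZY]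
  rw [covariance_sum, mul_pow] at cauchy_schwarz
  rw [← mul_div_assoc, le_div_iff₀ (by positivity)]
  linarith

end Equicorrelated

section InfiniteProduct

lemma eq_infinitePi_of_restrict_map_eval {ι X : Type*} [MeasurableSpace X]
    {γ : Measure (ι → X)} [IsProbabilityMeasure γ] {μ : Measure X} [IsProbabilityMeasure μ]
    (h : ∀ (S : Finset ι) (T : ι → Set X), (∀ i, MeasurableSet (T i)) → ∀ k ∉ S,
      (γ.restrict (Set.pi S T)).map (fun x ↦ x k) = γ (Set.pi S T) • μ) :
    γ = Measure.infinitePi fun _ : ι ↦ μ := by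
  classical
  refine Measure.eq_infinitePi _ fun S T hT ↦ ?_
  induction S using Finset.induction_on with
  | empty => simp
  | insert k S hk ih =>
    have box_eq := congrArg (fun ν : Measure X ↦ ν (T k)) (h S T hT k hk)
    simp only [Measure.smul_apply, smul_eq_mul] at box_eq
    rw [Measure.map_apply (measurable_pi_apply k) (hT k),
      Measure.restrict_apply (measurable_pi_apply k (hT k)), ih] at box_eq
    rw [Finset.prod_insert hk, mul_comm, Finset.coe_insert, Set.insert_pi]
    exact box_eq

variable {d : ℕ} {μ : Measure (Ed d)} [IsProbabilityMeasure μ]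

lemma IsInfiniteProduct.eq_infinitePi {γ : Measure (ℕ → Ed d)} (hγ : IsInfiniteProduct γ μ) :
    γ = Measure.infinitePi fun _ : ℕ ↦ μ := by
  refine IsProjectiveLimit.unique (fun S ↦ ?_) (Measure.isProjectiveLimit_infinitePi _)
  let e : S → Fin (S.sup id + 1) :=
    fun i ↦ ⟨i, Nat.lt_succ_of_le (Finset.le_sup (f := id) i.2)⟩
  have e_injective : Function.Injective e := fun i j hij ↦ Subtype.ext (congrArg Fin.val hij)
  have restrict_factors : (S.restrict : (ℕ → Ed d) → S → Ed d) =
      (fun (y : Fin (S.sup id + 1) → Ed d) (i : S) ↦ y (e i)) ∘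
        fun (x : ℕ → Ed d) (i : Fin (S.sup id + 1)) ↦ x i.val := rfl
  rw [restrict_factors, ← Measure.map_map (by fun_prop) (by fun_prop), hγ,
    ← Measure.infinitePi_eq_pi, Measure.map_infinitePi_infinitePi_of_inj e_injective,
    Measure.infinitePi_eq_pi]

lemma isExchangeable_infinitePi : IsExchangeable (Measure.infinitePi fun _ : ℕ ↦ μ) :=
  fun σ _ ↦ Measure.map_infinitePi_infinitePi_of_inj σ.injective

lemma hasMarginal_infinitePi : HasMarginal (Measure.infinitePi fun _ : ℕ ↦ μ) μ :=
  fun n ↦ Measure.infinitePi_map_eval _ n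

lemma Cinf_infinitePi {c : Ed d → Ed d → ℝ≥0∞} (hc : Measurable (Function.uncurry c)) :
    Cinf c (Measure.infinitePi fun _ : ℕ ↦ μ) = ∫⁻ x, ∫⁻ y, c x y ∂μ ∂μ := by
  rw [lintegral_lintegral hc.aemeasurable,
    ← Measure.infinitePi_map_eval_prod (P := fun _ : ℕ ↦ μ) zero_ne_one]
  have eval_prod : Measurable fun x : ℕ → Ed d ↦ (x 0, x 1) := by fun_prop
  exact (lintegral_map hc eval_prod).symm

end InfiniteProduct

section Exchangeable

variable {d : ℕ} {γ : Measure (ℕ → Ed d)} {μ : Measure (Ed d)}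

lemma HasMarginal.measurePreserving_eval (hμ : HasMarginal γ μ) (i : ℕ) :
    MeasurePreserving (fun x : ℕ → Ed d ↦ x i) γ μ :=
  ⟨measurable_pi_apply i, hμ i⟩

lemma HasMarginal.memLp_eval (hμ : HasMarginal γ μ) {f : Ed d → ℝ} {p : ℝ≥0∞}
    (hf : MemLp f p μ) (i : ℕ) : MemLp (fun x : ℕ → Ed d ↦ f (x i)) p γ :=
  hf.comp_measurePreserving (hμ.measurePreserving_eval i)

lemma HasMarginal.integral_eval (hμ : HasMarginal γ μ) {f : Ed d → ℝ}
    (hf : AEStronglyMeasurable f μ) (i : ℕ) : ∫ x, f (x i) ∂γ = ∫ x, f x ∂μ := by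
  have map_eval := hμ i
  subst map_eval
  exact (integral_map (measurable_pi_apply i).aemeasurable hf).symm

lemma HasMarginal.variance_eval (hμ : HasMarginal γ μ) {f : Ed d → ℝ} (hf : AEMeasurable f μ)
    (i : ℕ) : Var[fun x ↦ f (x i); γ] = Var[f; μ] :=
  (hμ.measurePreserving_eval i).variance_fun_comp hf

lemma IsExchangeable.measurePreserving_swap (hγ : IsExchangeable γ) (k l : ℕ) :
    MeasurePreserving (fun (x : ℕ → Ed d) n ↦ x (Equiv.swap k l n)) γ γ := by
  refine ⟨by fun_prop, hγ _ ((Set.toFinite {k, l}).subset fun n hn ↦ ?_)⟩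
  by_contra h
  simp only [Set.mem_insert_iff, Set.mem_singleton_iff, not_or] at h
  exact hn (Equiv.swap_apply_of_ne_of_ne h.1 h.2)

lemma IsExchangeable.covariance_eval_eq (hγ : IsExchangeable γ)
    {Z : (ℕ → Ed d) → ℝ} (hZ : Measurable Z) {s : Set ℕ} (hZs : DependsOn Z s)
    {f : Ed d → ℝ} (hf : Measurable f) {k l : ℕ} (hk : k ∉ s) (hl : l ∉ s) :
    cov[Z, fun x ↦ f (x k); γ] = cov[Z, fun x ↦ f (x l); γ] := by
  have Z_swap (x : ℕ → Ed d) : Z (fun n ↦ x (Equiv.swap k l n)) = Z x := by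
    refine hZs fun n hn ↦ ?_
    rw [Equiv.swap_apply_of_ne_of_ne] <;> rintro rfl <;> contradiction
  have swap_preserving := hγ.measurePreserving_swap k l
  have f_eval : AEStronglyMeasurable (fun x : ℕ → Ed d ↦ f (x k))
      (γ.map fun x n ↦ x (Equiv.swap k l n)) :=
    (hf.comp (measurable_pi_apply k)).aestronglyMeasurable
  conv_lhs => rw [← swap_preserving.map_eq]
  rw [covariance_map_fun hZ.aestronglyMeasurable f_eval swap_preserving.measurable.aemeasurable]
  simp only [Z_swap, Equiv.swap_apply_left]

lemma dependsOn_comp_eval {ι X β : Type*} (f : X → β) (i : ι) :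
    DependsOn (fun x : ι → X ↦ f (x i)) {i} :=
  fun _ _ hxy ↦ congrArg f (hxy i rfl)

lemma dependsOn_indicator_pi {ι X : Type*} (S : Set ι) (T : ι → Set X) :
    DependsOn ((S.pi T).indicator (1 : (ι → X) → ℝ)) S := by
  intro x y hxy
  have mem_iff : x ∈ S.pi T ↔ y ∈ S.pi T := forall₂_congr fun i hi ↦ by rw [hxy i hi]
  by_cases hx : x ∈ S.pi T
  · rw [Set.indicator_of_mem hx, Set.indicator_of_mem (mem_iff.1 hx), Pi.one_apply, Pi.one_apply]
  · rw [Set.indicator_of_notMem hx, Set.indicator_of_notMem (mt mem_iff.2 hx)]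

lemma IsExchangeable.covariance_eval_eval (hγ : IsExchangeable γ) {f : Ed d → ℝ}
    (hf : Measurable f) {i j : ℕ} (hij : i ≠ j) :
    cov[fun x ↦ f (x i), fun x ↦ f (x j); γ] = cov[fun x ↦ f (x 0), fun x ↦ f (x 1); γ] := by
  have move {a b c : ℕ} (hb : b ≠ a) (hc : c ≠ a) :
      cov[fun x ↦ f (x a), fun x ↦ f (x b); γ] = cov[fun x ↦ f (x a), fun x ↦ f (x c); γ] :=
    hγ.covariance_eval_eq (hf.comp (measurable_pi_apply a)) (dependsOn_comp_eval f a) hf hb hc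
  calc
    _ = cov[fun x ↦ f (x i), fun x ↦ f (x (i + 1)); γ] := move hij.symm (by omega)
    _ = cov[fun x ↦ f (x 0), fun x ↦ f (x (i + 1)); γ] := by
      rw [covariance_comm, move (c := 0) (by omega) (by omega), covariance_comm]
    _ = _ := move (by omega) one_ne_zero

variable [IsProbabilityMeasure γ] {f : Ed d → ℝ}

lemma IsExchangeable.covariance_nonneg (hγ : IsExchangeable γ) (hμ : HasMarginal γ μ)
    (hf : Measurable f) (hf2 : MemLp f 2 μ) :
    0 ≤ cov[fun x ↦ f (x 0), fun x ↦ f (x 1); γ] :=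
  covariance_nonneg_of_equicorrelated (Y := fun i (x : ℕ → Ed d) ↦ f (x i)) (v := Var[f; μ])
    (fun i ↦ hμ.memLp_eval hf2 i)
    (fun i ↦ hμ.variance_eval hf.aemeasurable i)
    (fun _ _ ↦ hγ.covariance_eval_eval hf)

-- The coordinates beyond `S` are equicorrelated, and `Z` has the same covariance with all of them.
lemma IsExchangeable.sq_covariance_le (hγ : IsExchangeable γ) (hμ : HasMarginal γ μ)
    (hf : Measurable f) (hf2 : MemLp f 2 μ) {Z : (ℕ → Ed d) → ℝ} (hZ : Measurable Z)
    (hZ2 : MemLp Z 2 γ) {S : Finset ℕ} (hZS : DependsOn Z S) {k : ℕ} (hk : k ∉ S) :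
    cov[Z, fun x ↦ f (x k); γ] ^ 2 ≤
      Var[Z; γ] * cov[fun x ↦ f (x 0), fun x ↦ f (x 1); γ] := by
  have beyond (i : ℕ) : S.sup id + 1 + i ∉ S := fun hi ↦ by
    have := Finset.le_sup (f := id) hi
    simp only [id] at this
    omega
  exact sq_covariance_le_of_equicorrelated
    (Y := fun i (x : ℕ → Ed d) ↦ f (x (S.sup id + 1 + i))) (v := Var[f; μ])
    (fun i ↦ hμ.memLp_eval hf2 _)
    (fun i ↦ hμ.variance_eval hf.aemeasurable _)
    (fun _ _ hij ↦ hγ.covariance_eval_eval hf (by omega)) hZ2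
    (fun i ↦ hγ.covariance_eval_eq hZ hZS hf (beyond i) hk)

lemma HasMarginal.covariance_eval_eval (hμ : HasMarginal γ μ) (hf2 : MemLp f 2 μ) (i j : ℕ) :
    cov[fun x ↦ f (x i), fun x ↦ f (x j); γ] =
      ∫ x, f (x i) * f (x j) ∂γ - (∫ x, f x ∂μ) ^ 2 := by
  rw [covariance_eq_sub (hμ.memLp_eval hf2 i) (hμ.memLp_eval hf2 j),
    hμ.integral_eval hf2.1, hμ.integral_eval hf2.1, sq]
  rfl

lemma IsExchangeable.setIntegral_pi_eval (hγ : IsExchangeable γ) (hμ : HasMarginal γ μ)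
    (hf : Measurable f) (hf2 : MemLp f 2 μ)
    (hcov : cov[fun x ↦ f (x 0), fun x ↦ f (x 1); γ] = 0) {S : Finset ℕ} {T : ℕ → Set (Ed d)}
    (hT : ∀ i, MeasurableSet (T i)) {k : ℕ} (hk : k ∉ S) :
    ∫ x in Set.pi S T, f (x k) ∂γ = γ.real (Set.pi S T) * ∫ x, f x ∂μ := by
  have hA : MeasurableSet (Set.pi (S : Set ℕ) T) := .pi S.countable_toSet fun i _ ↦ hT i
  have hZ : Measurable ((Set.pi (S : Set ℕ) T).indicator (1 : (ℕ → Ed d) → ℝ)) :=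
    measurable_one.indicator hA
  have hZ2 : MemLp ((Set.pi (S : Set ℕ) T).indicator (1 : (ℕ → Ed d) → ℝ)) 2 γ :=
    (memLp_const (1 : ℝ)).indicator hA
  have uncorrelated : cov[(Set.pi (S : Set ℕ) T).indicator 1, fun x ↦ f (x k); γ] = 0 := by
    have := hγ.sq_covariance_le hμ hf hf2 hZ hZ2 (dependsOn_indicator_pi _ T) hk
    rw [hcov, mul_zero] at this
    exact pow_eq_zero_iff two_ne_zero |>.1 (this.antisymm (sq_nonneg _))
  have indicator_mul : (Set.pi (S : Set ℕ) T).indicator 1 * (fun x ↦ f (x k)) =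
      (Set.pi (S : Set ℕ) T).indicator fun x ↦ f (x k) := by
    ext x
    simp [Set.indicator]
  rwa [covariance_eq_sub hZ2 (hμ.memLp_eval hf2 k),
    indicator_mul, integral_indicator hA, integral_indicator_one hA,
    hμ.integral_eval hf2.1,
    sub_eq_zero] at uncorrelated

end Exchangeable

section SquareSuperposition

variable {X P : Type*} [MeasurableSpace X] [MeasurableSpace P]

/-- The cost `c` is the superposition, weighted by `Λ`, of the rank-one costs
`(x, y) ↦ k p x * k p y` with bounded nonnegative profiles `k p`. This is a pointwise form of
positive definiteness of `c`, meaningful also where `c` is infinite. -/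
structure IsSquareSuperposition (c : X → X → ℝ≥0∞) (k : P → X → ℝ) (Λ : Measure P) : Prop where
  measurable_uncurry : Measurable (Function.uncurry k)
  nonneg : ∀ p x, 0 ≤ k p x
  bounded : ∀ p, ∃ C, ∀ x, k p x ≤ C
  cost_eq : ∀ x y, c x y = ∫⁻ p, ENNReal.ofReal (k p x * k p y) ∂Λ

/-- A finite measure on `X` is determined by its integrals against `k p` for `Λ`-almost every `p`.
For a square-superposition cost this plays the role of strict positive definiteness. -/
def IsMeasureSeparating (k : P → X → ℝ) (Λ : Measure P) : Prop :=
  ∀ (α β : Measure X) [IsFiniteMeasure α] [IsFiniteMeasure β],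
    (∀ᵐ p ∂Λ, ∫ x, k p x ∂α = ∫ x, k p x ∂β) → α = β

namespace IsSquareSuperposition

variable {c : X → X → ℝ≥0∞} {k : P → X → ℝ} {Λ : Measure P}

lemma measurable_profile (h : IsSquareSuperposition c k Λ) (p : P) : Measurable (k p) :=
  h.measurable_uncurry.of_uncurry_left

lemma memLp_profile (h : IsSquareSuperposition c k Λ) (p : P) (q : ℝ≥0∞) (μ : Measure X)
    [IsFiniteMeasure μ] : MemLp (k p) q μ := by
  obtain ⟨C, hC⟩ := h.bounded p
  refine .of_bound (h.measurable_profile p).aestronglyMeasurable C (ae_of_all _ fun x ↦ ?_)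
  rw [Real.norm_of_nonneg (h.nonneg p x)]
  exact hC x

lemma measurable_integral_profile (h : IsSquareSuperposition c k Λ) (μ : Measure X) [SFinite μ] :
    Measurable fun p ↦ ∫ x, k p x ∂μ :=
  h.measurable_uncurry.stronglyMeasurable.integral_prod_right.measurable

variable [SFinite Λ]

lemma measurable_cost (h : IsSquareSuperposition c k Λ) : Measurable (Function.uncurry c) := by
  have uncurry_eq : Function.uncurry c =
      fun q : X × X ↦ ∫⁻ p, ENNReal.ofReal (k p q.1 * k p q.2) ∂Λ :=
    funext fun q ↦ h.cost_eq q.1 q.2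
  have hk := h.measurable_uncurry
  rw [uncurry_eq]
  exact Measurable.lintegral_prod_right' (f := fun q : (X × X) × P ↦
    ENNReal.ofReal (k q.2 q.1.1 * k q.2 q.1.2)) (by fun_prop)

lemma lintegral_cost (h : IsSquareSuperposition c k Λ) {Ω : Type*} [MeasurableSpace Ω]
    {π : Measure Ω} [IsFiniteMeasure π] {A B : Ω → X} (hA : Measurable A) (hB : Measurable B) :
    ∫⁻ ω, c (A ω) (B ω) ∂π =
      ∫⁻ p, ENNReal.ofReal (∫ ω, k p (A ω) * k p (B ω) ∂π) ∂Λ := by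
  have hk := h.measurable_uncurry
  have integrable_mul (p : P) : Integrable (fun ω ↦ k p (A ω) * k p (B ω)) π := by
    have memLp_comp {D : Ω → X} (hD : Measurable D) : MemLp (fun ω ↦ k p (D ω)) 2 π :=
      (h.memLp_profile p 2 (π.map D)).comp_of_map hD.aemeasurable
    exact (memLp_comp hA).integrable_mul (memLp_comp hB)
  have mul_nonneg (p : P) : 0 ≤ᵐ[π] fun ω ↦ k p (A ω) * k p (B ω) :=
    ae_of_all _ fun ω ↦ mul_nonneg (h.nonneg p _) (h.nonneg p _)
  simp_rw [h.cost_eq, ofReal_integral_eq_lintegral_ofReal (integrable_mul _) (mul_nonneg _)]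
  exact lintegral_lintegral_swap (by fun_prop)

lemma lintegral_lintegral_cost (h : IsSquareSuperposition c k Λ) (μ : Measure X)
    [IsFiniteMeasure μ] :
    ∫⁻ x, ∫⁻ y, c x y ∂μ ∂μ = ∫⁻ p, ENNReal.ofReal ((∫ x, k p x ∂μ) ^ 2) ∂Λ := by
  rw [lintegral_lintegral h.measurable_cost.aemeasurable,
    h.lintegral_cost measurable_fst measurable_snd]
  simp_rw [integral_prod_mul, sq]

end IsSquareSuperposition

end SquareSuperposition

section InfiniteBody

namespace IsSquareSuperposition

variable {d : ℕ} {P : Type*} [MeasurableSpace P] {c : Ed d → Ed d → ℝ≥0∞} {k : P → Ed d → ℝ}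
  {Λ : Measure P} {γ : Measure (ℕ → Ed d)} [IsProbabilityMeasure γ]
  {μ : Measure (Ed d)} [IsProbabilityMeasure μ]

lemma eq_infinitePi_of_ae_covariance_eq_zero (h : IsSquareSuperposition c k Λ)
    (hsep : IsMeasureSeparating k Λ) (hγ : IsExchangeable γ) (hμ : HasMarginal γ μ)
    (hcov : ∀ᵐ p ∂Λ, cov[fun x ↦ k p (x 0), fun x ↦ k p (x 1); γ] = 0) :
    γ = Measure.infinitePi fun _ : ℕ ↦ μ := by
  refine eq_infinitePi_of_restrict_map_eval fun S T hT l hl ↦ ?_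
  have : IsFiniteMeasure (γ (Set.pi S T) • μ) := μ.smul_finite (measure_ne_top γ _)
  refine hsep _ _ ?_
  filter_upwards [hcov] with p hp
  rw [integral_map (measurable_pi_apply l).aemeasurable
      (h.measurable_profile p).aestronglyMeasurable, integral_smul_measure,
    hγ.setIntegral_pi_eval hμ (h.measurable_profile p) (h.memLp_profile p 2 μ) hp hT hl]
  rfl

variable [SFinite Λ]

lemma Cinf_eq_add_lintegral_covariance (h : IsSquareSuperposition c k Λ) (hγ : IsExchangeable γ)
    (hμ : HasMarginal γ μ) :
    Cinf c γ = ∫⁻ x, ∫⁻ y, c x y ∂μ ∂μ +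
      ∫⁻ p, ENNReal.ofReal cov[fun x ↦ k p (x 0), fun x ↦ k p (x 1); γ] ∂Λ := by
  have measurable_mean := h.measurable_integral_profile μ
  have integral_mul_eq (p : P) : ∫ x, k p (x 0) * k p (x 1) ∂γ =
      (∫ x, k p x ∂μ) ^ 2 + cov[fun x ↦ k p (x 0), fun x ↦ k p (x 1); γ] := by
    rw [hμ.covariance_eval_eval (h.memLp_profile p 2 μ), add_sub_cancel]
  have covariance_nonneg (p : P) : 0 ≤ cov[fun x ↦ k p (x 0), fun x ↦ k p (x 1); γ] :=
    hγ.covariance_nonneg hμ (h.measurable_profile p) (h.memLp_profile p 2 μ)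
  rw [Cinf, h.lintegral_cost (measurable_pi_apply 0) (measurable_pi_apply 1),
    h.lintegral_lintegral_cost, ← lintegral_add_left (by fun_prop)]
  simp_rw [integral_mul_eq, ENNReal.ofReal_add (sq_nonneg _) (covariance_nonneg _)]

lemma lintegral_lintegral_le_Cinf (h : IsSquareSuperposition c k Λ) (hγ : IsExchangeable γ)
    (hμ : HasMarginal γ μ) : ∫⁻ x, ∫⁻ y, c x y ∂μ ∂μ ≤ Cinf c γ :=
  le_self_add.trans_eq (h.Cinf_eq_add_lintegral_covariance hγ hμ).symm

lemma FinfOT_eq (h : IsSquareSuperposition c k Λ) :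
    FinfOT c μ = ∫⁻ x, ∫⁻ y, c x y ∂μ ∂μ := by
  refine le_antisymm ?_ (le_iInf fun γ ↦ le_iInf fun _ ↦ le_iInf₂ fun hγ hμ ↦
    h.lintegral_lintegral_le_Cinf hγ hμ)
  rw [← Cinf_infinitePi h.measurable_cost]
  exact iInf_le_of_le (Measure.infinitePi fun _ ↦ μ) <| iInf_le_of_le inferInstance <|
    iInf₂_le isExchangeable_infinitePi hasMarginal_infinitePi

lemma ae_covariance_eq_zero (h : IsSquareSuperposition c k Λ)
    (hfin : ∫⁻ x, ∫⁻ y, c x y ∂μ ∂μ ≠ ⊤) (hγ : IsExchangeable γ) (hμ : HasMarginal γ μ)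
    (hmin : Cinf c γ = ∫⁻ x, ∫⁻ y, c x y ∂μ ∂μ) :
    ∀ᵐ p ∂Λ, cov[fun x ↦ k p (x 0), fun x ↦ k p (x 1); γ] = 0 := by
  have hk := h.measurable_uncurry
  have measurable_covariance :
      Measurable fun p ↦ cov[fun x ↦ k p (x 0), fun x ↦ k p (x 1); γ] := by
    have measurable_mean := h.measurable_integral_profile μ
    have measurable_mean_mul : Measurable fun p ↦ ∫ x, k p (x 0) * k p (x 1) ∂γ := by
      have measurable_mul : Measurable fun q : P × (ℕ → Ed d) ↦
          k q.1 (q.2 0) * k q.1 (q.2 1) := by fun_prop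
      exact measurable_mul.stronglyMeasurable.integral_prod_right.measurable
    simp_rw [hμ.covariance_eval_eval (h.memLp_profile _ 2 μ)]
    fun_prop
  have lintegral_covariance :
      ∫⁻ p, ENNReal.ofReal cov[fun x ↦ k p (x 0), fun x ↦ k p (x 1); γ] ∂Λ = 0 := by
    have decomposition := h.Cinf_eq_add_lintegral_covariance hγ hμ
    rw [hmin] at decomposition
    exact (ENNReal.add_right_inj hfin).1 (by rw [← decomposition, add_zero])
  rw [lintegral_eq_zero_iff measurable_covariance.ennreal_ofReal] at lintegral_covariance
  filter_upwards [lintegral_covariance] with p hp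
  exact (ENNReal.ofReal_eq_zero.1 hp).antisymm
    (hγ.covariance_nonneg hμ (h.measurable_profile p) (h.memLp_profile p 2 μ))

theorem eq_infinitePi_of_Cinf_eq (h : IsSquareSuperposition c k Λ)
    (hsep : IsMeasureSeparating k Λ) (hfin : ∫⁻ x, ∫⁻ y, c x y ∂μ ∂μ ≠ ⊤)
    (hγ : IsExchangeable γ) (hμ : HasMarginal γ μ)
    (hmin : Cinf c γ = ∫⁻ x, ∫⁻ y, c x y ∂μ ∂μ) :
    γ = Measure.infinitePi fun _ : ℕ ↦ μ :=
  h.eq_infinitePi_of_ae_covariance_eq_zero hsep hγ hμ (h.ae_covariance_eq_zero hfin hγ hμ hmin)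

end IsSquareSuperposition

end InfiniteBody

section Gaussian

lemma conv_withDensity {G : Type*} [AddCommGroup G] [MeasurableSpace G] [MeasurableAdd₂ G]
    [MeasurableNeg G] (α π : Measure G) [SFinite α] [SFinite π] [π.IsAddLeftInvariant]
    {g : G → ℝ≥0∞} (hg : Measurable g) :
    α ∗ π.withDensity g = π.withDensity fun z ↦ ∫⁻ x, g (z - x) ∂α := by
  have translate {φ : G → ℝ≥0∞} (hφ : Measurable φ) (x : G) :
      ∫⁻ y, φ (x + y) ∂π.withDensity g = ∫⁻ z, g (z - x) * φ z ∂π := by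
    rw [lintegral_withDensity_eq_lintegral_mul _ hg (by fun_prop),
      ← lintegral_add_left_eq_self (fun z ↦ g (z - x) * φ z) x]
    simp only [Pi.mul_apply, add_sub_cancel_left]
  refine Measure.ext_of_lintegral _ fun φ hφ ↦ ?_
  rw [Measure.lintegral_conv hφ, lintegral_withDensity_eq_lintegral_mul _ _ hφ]
  · simp_rw [translate hφ, Pi.mul_apply]
    rw [lintegral_lintegral_swap (by fun_prop)]
    exact lintegral_congr fun z ↦ lintegral_mul_const _ (by fun_prop)
  · exact Measurable.lintegral_prod_right' (f := fun q : G × G ↦ g (q.1 - q.2)) (by fun_prop)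

/-- The Gaussian bump of inverse width `s` centred at `z`, for the parameter `p = (s, z)`. With the
factor `2` in the exponent, products of two bumps integrate over `z` to a multiple of
`exp (-s² ‖x - y‖²)`. -/
def gaussianBump {V : Type*} [NormedAddCommGroup V] (p : ℝ × V) (x : V) : ℝ :=
  Real.exp (-(2 * p.1 ^ 2) * ‖x - p.2‖ ^ 2)

variable {V : Type*} [NormedAddCommGroup V] [InnerProductSpace ℝ V]

lemma gaussianBump_mul_gaussianBump (s : ℝ) (z x y : V) :
    gaussianBump (s, z) x * gaussianBump (s, z) y =
      Real.exp (-s ^ 2 * ‖x - y‖ ^ 2) *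
        Real.exp (-(4 * s ^ 2) * ‖z - (1 / 2 : ℝ) • (x + y)‖ ^ 2) := by
  have parallelogram := parallelogram_law_with_norm ℝ (x - z) (y - z)
  have norm_sum : ‖(x - z) + (y - z)‖ = 2 * ‖z - (1 / 2 : ℝ) • (x + y)‖ := by
    rw [show (x - z) + (y - z) = (-2 : ℝ) • (z - (1 / 2 : ℝ) • (x + y)) by module, norm_smul]
    norm_num
  rw [sub_sub_sub_cancel_right, norm_sum] at parallelogram
  rw [gaussianBump, gaussianBump, ← Real.exp_add, ← Real.exp_add]
  congr 1
  linear_combination s ^ 2 * parallelogram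

variable [MeasurableSpace V] [BorelSpace V]

lemma conv_right_cancel_of_charFun_ne_zero [CompleteSpace V] [SecondCountableTopology V]
    {α β ν : Measure V} [IsFiniteMeasure α] [IsFiniteMeasure β] [IsFiniteMeasure ν]
    (hν : ∀ t, charFun ν t ≠ 0) (h : α ∗ ν = β ∗ ν) : α = β := by
  refine Measure.ext_of_charFun (funext fun t ↦ mul_right_cancel₀ (hν t) ?_)
  rw [← charFun_conv, ← charFun_conv, h]

variable [FiniteDimensional ℝ V]

lemma integrable_exp_neg_mul_sq_norm {b : ℝ} (hb : 0 < b) :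
    Integrable fun v : V ↦ Real.exp (-b * ‖v‖ ^ 2) := by
  refine .of_integral_ne_zero ?_
  rw [GaussianFourier.integral_rexp_neg_mul_sq_norm hb]
  positivity

lemma lintegral_exp_neg_mul_sq_norm {b : ℝ} (hb : 0 < b) :
    ∫⁻ v : V, ENNReal.ofReal (Real.exp (-b * ‖v‖ ^ 2)) =
      ENNReal.ofReal ((Real.pi / b) ^ (Module.finrank ℝ V / 2 : ℝ)) := by
  rw [← ofReal_integral_eq_lintegral_ofReal (integrable_exp_neg_mul_sq_norm hb)
    (ae_of_all _ fun v ↦ (Real.exp_pos _).le), GaussianFourier.integral_rexp_neg_mul_sq_norm hb]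

lemma charFun_withDensity_exp_neg_mul_sq_norm_ne_zero {b : ℝ} (hb : 0 < b) (t : V) :
    charFun (volume.withDensity fun v : V ↦ ENNReal.ofReal (Real.exp (-b * ‖v‖ ^ 2))) t ≠ 0 := by
  have charFun_eq : charFun (volume.withDensity fun v : V ↦
      ENNReal.ofReal (Real.exp (-b * ‖v‖ ^ 2))) t =
      ∫ v : V, Complex.exp (-(b : ℂ) * ‖v‖ ^ 2 + Complex.I * inner ℝ t v) := by
    rw [charFun_apply, integral_withDensity_eq_integral_toReal_smul (by fun_prop) (by simp)]
    refine integral_congr_ae (ae_of_all _ fun v ↦ ?_)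
    simp only [ENNReal.toReal_ofReal (Real.exp_pos _).le, Complex.real_smul, Complex.exp_add,
      real_inner_comm t v, Complex.ofReal_exp]
    push_cast
    ring_nf
  rw [charFun_eq, GaussianFourier.integral_cexp_neg_mul_sq_norm_add (by simpa using hb)]
  refine mul_ne_zero ?_ (Complex.exp_ne_zero _)
  simp [Complex.cpow_eq_zero_iff, hb.ne']

lemma ext_of_ae_integral_exp_neg_mul_sq_norm_sub {b : ℝ} (hb : 0 < b) {α β : Measure V}
    [IsFiniteMeasure α] [IsFiniteMeasure β]
    (h : ∀ᵐ z : V, ∫ x, Real.exp (-b * ‖x - z‖ ^ 2) ∂α = ∫ x, Real.exp (-b * ‖x - z‖ ^ 2) ∂β) :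
    α = β := by
  have : IsFiniteMeasure (volume.withDensity fun v : V ↦
      ENNReal.ofReal (Real.exp (-b * ‖v‖ ^ 2))) :=
    isFiniteMeasure_withDensity_ofReal (integrable_exp_neg_mul_sq_norm hb).2
  have lintegral_eq (ν : Measure V) [IsFiniteMeasure ν] (z : V) :
      ∫⁻ x, ENNReal.ofReal (Real.exp (-b * ‖z - x‖ ^ 2)) ∂ν =
        ENNReal.ofReal (∫ x, Real.exp (-b * ‖x - z‖ ^ 2) ∂ν) := by
    have integrable : Integrable (fun x ↦ Real.exp (-b * ‖x - z‖ ^ 2)) ν :=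
      .of_bound (by fun_prop) 1 (ae_of_all _ fun x ↦ by
        rw [Real.norm_of_nonneg (Real.exp_pos _).le, Real.exp_le_one_iff, neg_mul, neg_nonpos]
        positivity)
    simp_rw [norm_sub_rev z]
    exact (ofReal_integral_eq_lintegral_ofReal integrable
      (ae_of_all _ fun x ↦ (Real.exp_pos _).le)).symm
  refine conv_right_cancel_of_charFun_ne_zero
    (charFun_withDensity_exp_neg_mul_sq_norm_ne_zero hb) ?_
  rw [conv_withDensity _ _ (by fun_prop), conv_withDensity _ _ (by fun_prop)]
  refine withDensity_congr_ae ?_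
  filter_upwards [h] with z hz
  rw [lintegral_eq, lintegral_eq, hz]

lemma lintegral_gaussianBump_mul_gaussianBump {s : ℝ} (hs : s ≠ 0) (x y : V) :
    ∫⁻ z, ENNReal.ofReal (gaussianBump (s, z) x * gaussianBump (s, z) y) =
      ENNReal.ofReal ((Real.pi / (4 * s ^ 2)) ^ (Module.finrank ℝ V / 2 : ℝ)) *
        ENNReal.ofReal (Real.exp (-s ^ 2 * ‖x - y‖ ^ 2)) := by
  simp_rw [gaussianBump_mul_gaussianBump, ENNReal.ofReal_mul (Real.exp_pos _).le]
  rw [lintegral_const_mul _ (by fun_prop),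
    lintegral_sub_right_eq_self
      (fun z : V ↦ ENNReal.ofReal (Real.exp (-(4 * s ^ 2) * ‖z‖ ^ 2))),
    lintegral_exp_neg_mul_sq_norm (by positivity), mul_comm]

lemma ofReal_inv_eq_lintegral_exp_neg_sq {r : ℝ} (hr : 0 ≤ r) :
    (ENNReal.ofReal r)⁻¹ =
      ∫⁻ s : ℝ, ENNReal.ofReal (√Real.pi)⁻¹ * ENNReal.ofReal (Real.exp (-s ^ 2 * r ^ 2)) := by
  rcases hr.eq_or_lt with rfl | hr
  · simp [Real.pi_pos, ENNReal.mul_top]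
  · simp_rw [neg_mul, mul_comm (_ ^ 2) (r ^ 2), ← neg_mul]
    rw [lintegral_const_mul _ (by fun_prop),
      ← ofReal_integral_eq_lintegral_ofReal (integrable_exp_neg_mul_sq (by positivity))
        (ae_of_all _ fun s ↦ (Real.exp_pos _).le), integral_gaussian,
      ← ENNReal.ofReal_mul (by positivity), ← ENNReal.ofReal_inv_of_pos hr,
      Real.sqrt_div Real.pi_pos.le, Real.sqrt_sq hr.le]
    congr 1
    field_simp

end Gaussian

section Coulomb

variable {V : Type*} [NormedAddCommGroup V] [InnerProductSpace ℝ V] [MeasurableSpace V]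
  [BorelSpace V] [FiniteDimensional ℝ V]

variable (V) in
/-- The weight on Gaussian bumps `(s, z)` whose superposition is the Coulomb cost: the `s`-density
divides out the mass of the product of two bumps of inverse width `s` and carries the constant
`1 / √π` of `1 / r = π^(-1/2) ∫ exp (-s² r²) ds`. -/
def coulombWeight : Measure (ℝ × V) :=
  (volume.withDensity fun s : ℝ ↦ ENNReal.ofReal
    ((√Real.pi)⁻¹ * ((Real.pi / (4 * s ^ 2)) ^ (Module.finrank ℝ V / 2 : ℝ))⁻¹)).prod volume

instance : SFinite (coulombWeight V) := by
  unfold coulombWeight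
  infer_instance

lemma lintegral_gaussianBump_mul_gaussianBump_coulombWeight (x y : V) :
    ∫⁻ p, ENNReal.ofReal (gaussianBump p x * gaussianBump p y) ∂coulombWeight V =
      (ENNReal.ofReal (dist x y))⁻¹ := by
  have measurable_mul :
      Measurable fun p : ℝ × V ↦ ENNReal.ofReal (gaussianBump p x * gaussianBump p y) := by
    unfold gaussianBump
    fun_prop
  rw [coulombWeight, lintegral_prod _ measurable_mul.aemeasurable,
    lintegral_withDensity_eq_lintegral_mul _ (by fun_prop) measurable_mul.lintegral_prod_right',
    ofReal_inv_eq_lintegral_exp_neg_sq dist_nonneg]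
  refine lintegral_congr_ae ?_
  filter_upwards [Measure.ae_ne volume (0 : ℝ)] with s hs
  rw [Pi.mul_apply, lintegral_gaussianBump_mul_gaussianBump hs, ← mul_assoc,
    ← ENNReal.ofReal_mul (by positivity), inv_mul_cancel_right₀ (by positivity), dist_eq_norm]

lemma isMeasureSeparating_gaussianBump :
    IsMeasureSeparating (gaussianBump (V := V)) (coulombWeight V) := by
  intro α β _ _ h
  have ae_slice := Measure.ae_ae_of_ae_prod h
  rw [ae_withDensity_iff (by fun_prop)] at ae_slice
  obtain ⟨s, hs, hslice⟩ := ((Measure.ae_ne volume (0 : ℝ)).and ae_slice).exists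
  refine ext_of_ae_integral_exp_neg_mul_sq_norm_sub (b := 2 * s ^ 2) (by positivity) (hslice ?_)
  rw [ne_eq, ENNReal.ofReal_eq_zero, not_le]
  positivity

lemma isSquareSuperposition_coulomb {d : ℕ} :
    IsSquareSuperposition (coulomb (d := d)) gaussianBump (coulombWeight (Ed d)) where
  measurable_uncurry := by
    unfold gaussianBump
    fun_prop
  nonneg _ _ := (Real.exp_pos _).le
  bounded _ := ⟨1, fun _ ↦ by
    rw [gaussianBump, Real.exp_le_one_iff, neg_mul, neg_nonpos]
    positivity⟩
  cost_eq x y := (lintegral_gaussianBump_mul_gaussianBump_coulombWeight x y).symm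

end Coulomb

theorem coulomb_infinite_body_OT_unique_minimizer_general {d : ℕ}
    (μ : Measure (Ed d)) [IsProbabilityMeasure μ]
    (hfin : ∫⁻ x, ∫⁻ y, coulomb x y ∂μ ∂μ < ⊤)
    (γ₀ : Measure (ℕ → Ed d)) (hγ₀ : IsInfiniteProduct γ₀ μ) :
    IsExchangeable γ₀ ∧ HasMarginal γ₀ μ ∧
    Cinf coulomb γ₀ = FinfOT coulomb μ ∧
    FinfOT coulomb μ = ∫⁻ x, ∫⁻ y, coulomb x y ∂μ ∂μ ∧
    (∀ γ : Measure (ℕ → Ed d), IsProbabilityMeasure γ → IsExchangeable γ →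
      HasMarginal γ μ → Cinf coulomb γ = FinfOT coulomb μ → γ = γ₀) := by
  have h := isSquareSuperposition_coulomb (d := d)
  rw [hγ₀.eq_infinitePi, h.FinfOT_eq]
  exact ⟨isExchangeable_infinitePi, hasMarginal_infinitePi, Cinf_infinitePi h.measurable_cost, rfl,
    fun γ _ hγ hμ hmin ↦
      h.eq_infinitePi_of_Cinf_eq isMeasureSeparating_gaussianBump hfin.ne hγ hμ hmin⟩

/-- Theorem 1.1, Coulomb case: for the Coulomb cost `1/|x-y|` in `d = 3` and any
marginal `μ` with finite mean-field energy, the independent product measure `μ^⊗∞`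
is the unique minimizer of the infinite-body OT problem, and
`F_∞^OT[μ] = ∫∫ dμ(x) dμ(y)/|x-y|`. -/
theorem coulomb_infinite_body_OT_unique_minimizer
    (μ : Measure (Ed 3)) [IsProbabilityMeasure μ]
    (hfin : ∫⁻ x, ∫⁻ y, coulomb x y ∂μ ∂μ < ⊤)
    (γ₀ : Measure (ℕ → Ed 3)) [IsProbabilityMeasure γ₀]
    (hγ₀ : IsInfiniteProduct γ₀ μ) :
    IsExchangeable γ₀ ∧ HasMarginal γ₀ μ ∧
    Cinf coulomb γ₀ = FinfOT coulomb μ ∧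
    FinfOT coulomb μ = ∫⁻ x, ∫⁻ y, coulomb x y ∂μ ∂μ ∧
    (∀ γ : Measure (ℕ → Ed 3), IsProbabilityMeasure γ → IsExchangeable γ →
      HasMarginal γ μ → Cinf coulomb γ = FinfOT coulomb μ → γ = γ₀) :=
  coulomb_infinite_body_OT_unique_minimizer_general μ hfin γ₀ hγ₀
end
end

section
/- Let c : ℝ^d × ℝ^d → [0,∞] be Borel measurable, symmetric and lower semi-continuous (as a map into [0,∞] with its natural topology). Let μ be a Borel probability measure on ℝ^d such that there exists γ₀ ∈ P_sym^∞(ℝ^d) with γ₀ ↦ μ and ∫ c(x₁,x₂) dγ₀ < ∞. Then lim_{N→∞} F_N^OT[μ] = F_∞^OT[μ]. -/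
open MeasureTheory ENNReal Filter Topology ProbabilityTheory

noncomputable section

/-- A measure on `(ℝ^d)^N` is symmetric if it is invariant under all permutations
of the coordinates. -/
def IsSymmetricN {d N : ℕ} (γ : Measure (Fin N → Ed d)) : Prop :=
  ∀ σ : Equiv.Perm (Fin N), γ.map (fun x i => x (σ i)) = γ

/-- The `N`-body cost `Σ_{1 ≤ i < j ≤ N} c(x_i, x_j)`. -/
def pairCost {d N : ℕ} (c : Ed d → Ed d → ℝ≥0∞) (x : Fin N → Ed d) : ℝ≥0∞ :=
  ∑ i : Fin N, ∑ j : Fin N, if i < j then c (x i) (x j) else 0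

/-- The optimal cost per particle pair of the `N`-body optimal transport problem:
`F_N^OT[μ] = (1/binom(N,2)) inf { ∫ Σ_{i<j} c(x_i,x_j) dγ_N : γ_N ∈ P_sym^N(ℝ^d), γ_N ↦ μ }`. -/
def FNOT {d : ℕ} (N : ℕ) (c : Ed d → Ed d → ℝ≥0∞) (μ : Measure (Ed d)) : ℝ≥0∞ :=
  (N.choose 2 : ℝ≥0∞)⁻¹ *
    ⨅ (γ : Measure (Fin N → Ed d)) (_ : IsProbabilityMeasure γ) (_ : IsSymmetricN γ)
      (_ : ∀ i : Fin N, γ.map (fun x => x i) = μ), ∫⁻ x, pairCost c x ∂γ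

open TopologicalSpace

/-!
A plan for `N` particles extends to a plan on `ℕ → E` by letting every further coordinate be one
independent sample of `μ`; the extension keeps the marginals and is symmetric in the first `N`
coordinates. By symmetry all pairs of particles cost the same, so `F_N^OT[μ]` is the minimum of
`∫ c(x₀, x₁) dγ` over the plans `γ` on `ℕ → E` that are symmetric in the first `N` coordinates.
These sets of plans decrease to the exchangeable plans as `N → ∞`. They are weakly compact, since
fixing all the marginals forces tightness, and the cost is weakly lower semicontinuous by the layer
cake formula and the portmanteau theorem; hence the minima increase to the minimum over the
intersection.
-/

section LowerSemicontinuity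

theorem volume_Ioi_zero_inter_setOf_ofReal_lt (a : ℝ≥0∞) :
    volume (Set.Ioi (0 : ℝ) ∩ {t | ENNReal.ofReal t < a}) = a := by
  induction a with
  | top => simp
  | coe a =>
    have : Set.Ioi (0 : ℝ) ∩ {t | ENNReal.ofReal t < a} = Set.Ioo 0 (a : ℝ) := by
      ext t
      simp only [Set.mem_inter_iff, Set.mem_Ioi, Set.mem_ofPred_eq, Set.mem_Ioo]
      exact and_congr_right fun ht ↦ by
        rw [ENNReal.ofReal_lt_iff_lt_toReal ht.le ENNReal.coe_ne_top, ENNReal.coe_toReal]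
    rw [this, Real.volume_Ioo, sub_zero, ENNReal.ofReal_coe_nnreal]

theorem lintegral_eq_lintegral_measure_ofReal_lt {Ω : Type*} [MeasurableSpace Ω] (ν : Measure Ω)
    [SFinite ν] {f : Ω → ℝ≥0∞} (hf : Measurable f) :
    ∫⁻ x, f x ∂ν = ∫⁻ t in Set.Ioi (0 : ℝ), ν {x | ENNReal.ofReal t < f x} := by
  have hsub : MeasurableSet {p : Ω × ℝ | ENNReal.ofReal p.2 < f p.1} :=
    measurableSet_lt (by fun_prop) (by fun_prop)
  calc ∫⁻ x, f x ∂ν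
      = ∫⁻ x, volume.restrict (Set.Ioi (0 : ℝ)) {t | ENNReal.ofReal t < f x} ∂ν :=
        lintegral_congr fun x ↦ by
          rw [Measure.restrict_apply' measurableSet_Ioi, Set.inter_comm,
            volume_Ioi_zero_inter_setOf_ofReal_lt]
    _ = (ν.prod (volume.restrict (Set.Ioi 0))) {p | ENNReal.ofReal p.2 < f p.1} :=
        (Measure.prod_apply hsub).symm
    _ = ∫⁻ t in Set.Ioi (0 : ℝ), ν {x | ENNReal.ofReal t < f x} := Measure.prod_apply_symm hsub

theorem lowerSemicontinuous_lintegral_probabilityMeasure {Ω : Type*} [TopologicalSpace Ω]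
    [PseudoMetrizableSpace Ω] [SeparableSpace Ω] [MeasurableSpace Ω] [OpensMeasurableSpace Ω]
    {f : Ω → ℝ≥0∞} (hf : LowerSemicontinuous f) :
    LowerSemicontinuous fun ν : ProbabilityMeasure Ω ↦ ∫⁻ x, f x ∂(ν : Measure Ω) := by
  refine lowerSemicontinuous_iff_le_liminf.2 fun ν ↦ ?_
  simp only [lintegral_eq_lintegral_measure_ofReal_lt _ hf.measurable]
  calc ∫⁻ t in Set.Ioi (0 : ℝ), (ν : Measure Ω) {x | ENNReal.ofReal t < f x}
      ≤ ∫⁻ t in Set.Ioi (0 : ℝ),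
          liminf (fun ρ : ProbabilityMeasure Ω ↦ (ρ : Measure Ω) {x | ENNReal.ofReal t < f x})
            (𝓝 ν) :=
        lintegral_mono fun t ↦ ProbabilityMeasure.le_liminf_measure_open_of_tendsto tendsto_id
          (hf.isOpen_preimage (ENNReal.ofReal t))
    _ ≤ liminf (fun ρ : ProbabilityMeasure Ω ↦
          ∫⁻ t in Set.Ioi (0 : ℝ), (ρ : Measure Ω) {x | ENNReal.ofReal t < f x}) (𝓝 ν) :=
        lintegral_liminf_le fun ρ ↦ Antitone.measurable fun s t hst ↦
          measure_mono fun x hx ↦ (ENNReal.ofReal_le_ofReal hst).trans_lt hx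

end LowerSemicontinuity

section Couplings

theorem isClosed_setOf_map_eq_map {Ω Ω' : Type*} [TopologicalSpace Ω] [MeasurableSpace Ω]
    [OpensMeasurableSpace Ω] [TopologicalSpace Ω'] [MeasurableSpace Ω'] [BorelSpace Ω']
    [HasOuterApproxClosed Ω'] {f g : Ω → Ω'} (hf : Continuous f) (hg : Continuous g) :
    IsClosed {ν : ProbabilityMeasure Ω | (ν : Measure Ω).map f = (ν : Measure Ω).map g} := by
  simpa only [← ProbabilityMeasure.toMeasure_injective.eq_iff, ProbabilityMeasure.toMeasure_map]
    using isClosed_eq (ProbabilityMeasure.continuous_map hf) (ProbabilityMeasure.continuous_map hg)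

theorem isClosed_setOf_map_eq {Ω Ω' : Type*} [TopologicalSpace Ω] [MeasurableSpace Ω]
    [OpensMeasurableSpace Ω] [TopologicalSpace Ω'] [MeasurableSpace Ω'] [BorelSpace Ω']
    [HasOuterApproxClosed Ω'] {f : Ω → Ω'} (hf : Continuous f) (ρ : Measure Ω')
    [IsProbabilityMeasure ρ] :
    IsClosed {ν : ProbabilityMeasure Ω | (ν : Measure Ω).map f = ρ} := by
  let ρ' : ProbabilityMeasure Ω' := ⟨ρ, inferInstance⟩
  simpa only [← ProbabilityMeasure.toMeasure_injective.eq_iff, ProbabilityMeasure.toMeasure_map]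
    using! isClosed_eq (ProbabilityMeasure.continuous_map hf) (continuous_const (y := ρ'))

variable {ι : Type*} [Countable ι] {X : ι → Type*} [∀ i, TopologicalSpace (X i)]
  [∀ i, MeasurableSpace (X i)]

theorem isTightMeasureSet_of_forall_map_eval [∀ i, T2Space (X i)]
    [∀ i, OpensMeasurableSpace (X i)] {S : Set (Measure (∀ i, X i))}
    (hS : ∀ i, IsTightMeasureSet ((fun ν : Measure (∀ i, X i) ↦ ν.map (fun x ↦ x i)) '' S)) :
    IsTightMeasureSet S := by
  simp only [isTightMeasureSet_iff_exists_isCompact_measure_compl_le, Set.forall_mem_image] at hS ⊢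
  intro ε hε
  obtain ⟨δ, hδ, hδε⟩ := ENNReal.exists_pos_sum_of_countable' hε.ne' ι
  choose K hK hKδ using fun i ↦ hS i (δ i) (hδ i)
  refine ⟨Set.univ.pi K, isCompact_univ_pi hK, fun ν hν ↦ ?_⟩
  have hcompl : (Set.univ.pi K)ᶜ = ⋃ i, (fun x : ∀ i, X i ↦ x i) ⁻¹' (K i)ᶜ := by
    ext x
    simp
  calc ν (Set.univ.pi K)ᶜ
      ≤ ∑' i, ν ((fun x : ∀ i, X i ↦ x i) ⁻¹' (K i)ᶜ) := hcompl ▸ measure_iUnion_le _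
    _ ≤ ∑' i, δ i := ENNReal.tsum_le_tsum fun i ↦ by
        rw [← Measure.map_apply (measurable_pi_apply i) (hK i).measurableSet.compl]
        exact hKδ i hν
    _ ≤ ε := hδε.le

theorem isCompact_setOf_forall_map_eval_eq [∀ i, PolishSpace (X i)] [∀ i, BorelSpace (X i)]
    (μ : ∀ i, Measure (X i)) [∀ i, IsProbabilityMeasure (μ i)] :
    IsCompact {ν : ProbabilityMeasure (∀ i, X i) |
      ∀ i, (ν : Measure (∀ i, X i)).map (fun x ↦ x i) = μ i} := by
  have hclosed : IsClosed {ν : ProbabilityMeasure (∀ i, X i) |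
      ∀ i, (ν : Measure (∀ i, X i)).map (fun x ↦ x i) = μ i} := by
    simp only [Set.ofPred_forall]
    exact isClosed_iInter fun i ↦ isClosed_setOf_map_eq (continuous_apply i) (μ i)
  rw [← hclosed.closure_eq]
  refine isCompact_closure_of_isTightMeasureSet (isTightMeasureSet_of_forall_map_eval fun i ↦ ?_)
  refine (isTightMeasureSet_singleton (μ := μ i)).subset ?_
  rintro _ ⟨_, ⟨ν, hν, rfl⟩, rfl⟩
  exact hν i

end Couplings

/-- Invariance of a measure on `ι → E` under the finitely supported permutations of the
coordinates in `s`. With `s = Set.univ` this is full symmetry on a finite index type and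
exchangeability on `ℕ`; the intermediate sets allow finite and infinite systems to be compared on
one and the same product space. -/
def IsSymmetricOn {ι E : Type*} [MeasurableSpace E] (s : Set ι) (γ : Measure (ι → E)) : Prop :=
  ∀ σ : Equiv.Perm ι, {i | σ i ≠ i}.Finite → {i | σ i ≠ i} ⊆ s → γ.map (fun x i ↦ x (σ i)) = γ

/-- The transport plans on `ι → E` all of whose marginals are `μ` and which are symmetric in the
coordinates in `s`. -/
def symmetricPlans {ι E : Type*} [MeasurableSpace E] (s : Set ι) (μ : Measure E) :
    Set (ProbabilityMeasure (ι → E)) :=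
  {γ | IsSymmetricOn s (γ : Measure (ι → E)) ∧ ∀ i, (γ : Measure (ι → E)).map (fun x ↦ x i) = μ}

/-- The least expected cost of the pair of particles `i`, `j` among the plans in
`symmetricPlans s μ`. -/
def minPairCost {ι E : Type*} [MeasurableSpace E] (c : E → E → ℝ≥0∞) (μ : Measure E) (s : Set ι)
    (i j : ι) : ℝ≥0∞ :=
  ⨅ γ ∈ symmetricPlans s μ, ∫⁻ x, c (x i) (x j) ∂(γ : Measure (ι → E))

/-- The `N`-body optimal transport cost per pair of particles on an arbitrary space `E`. For
`N < 2` there are no pairs, and the prefactor has the junk value `0⁻¹ = ⊤`. -/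
def minMeanPairCost {E : Type*} [MeasurableSpace E] (N : ℕ) (c : E → E → ℝ≥0∞) (μ : Measure E) :
    ℝ≥0∞ :=
  (N.choose 2 : ℝ≥0∞)⁻¹ * ⨅ γ ∈ symmetricPlans (Set.univ : Set (Fin N)) μ,
    ∫⁻ x, ∑ i, ∑ j, (if i < j then c (x i) (x j) else 0) ∂(γ : Measure (Fin N → E))

section Monotone

variable {ι E : Type*} [MeasurableSpace E] {s t : Set ι} {γ : Measure (ι → E)}

theorem IsSymmetricOn.mono (hγ : IsSymmetricOn t γ) (hst : s ⊆ t) : IsSymmetricOn s γ :=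
  fun σ hfin hσ ↦ hγ σ hfin (hσ.trans hst)

theorem isSymmetricOn_iUnion {s : ℕ → Set ι} (hs : Monotone s) :
    IsSymmetricOn (⋃ n, s n) γ ↔ ∀ n, IsSymmetricOn (s n) γ := by
  refine ⟨fun hγ n ↦ hγ.mono (Set.subset_iUnion s n), fun hγ σ hfin hσ ↦ ?_⟩
  obtain ⟨n, hn⟩ := hs.directed_le.exists_mem_subset_of_finset_subset_biUnion
    (s := hfin.toFinset) (by simpa using hσ)
  exact hγ n σ hfin (by simpa using hn)

theorem minPairCost_mono (c : E → E → ℝ≥0∞) (μ : Measure E) (i j : ι) :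
    Monotone fun s ↦ minPairCost c μ s i j :=
  fun _ _ hst ↦ biInf_mono fun _ hγ ↦ ⟨hγ.1.mono hst, hγ.2⟩

end Monotone

section Compactness

variable {ι E : Type*} [Countable ι] [TopologicalSpace E] [PolishSpace E] [MeasurableSpace E]
  [BorelSpace E]

theorem isClosed_setOf_isSymmetricOn (s : Set ι) :
    IsClosed {γ : ProbabilityMeasure (ι → E) | IsSymmetricOn s (γ : Measure (ι → E))} := by
  simp only [IsSymmetricOn, Set.ofPred_forall]
  refine isClosed_iInter fun σ ↦ isClosed_iInter fun _ ↦ isClosed_iInter fun _ ↦ ?_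
  simpa only [Measure.map_id] using
    isClosed_setOf_map_eq_map (f := fun (x : ι → E) i ↦ x (σ i)) (g := id) (by fun_prop)
      continuous_id

theorem isCompact_symmetricPlans (s : Set ι) (μ : Measure E) [IsProbabilityMeasure μ] :
    IsCompact (symmetricPlans s μ) :=
  (isCompact_setOf_forall_map_eval_eq fun _ ↦ μ).inter_left (isClosed_setOf_isSymmetricOn s)

theorem isClosed_setOf_lintegral_pair_le {c : E → E → ℝ≥0∞}
    (hc : LowerSemicontinuous fun p : E × E ↦ c p.1 p.2) (i j : ι) (a : ℝ≥0∞) :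
    IsClosed {γ : ProbabilityMeasure (ι → E) |
      ∫⁻ x, c (x i) (x j) ∂(γ : Measure (ι → E)) ≤ a} := by
  have hpair : LowerSemicontinuous fun x : ι → E ↦ c (x i) (x j) :=
    hc.comp (g := fun x : ι → E ↦ (x i, x j)) (by fun_prop)
  exact (lowerSemicontinuous_lintegral_probabilityMeasure hpair).isClosed_preimage a

theorem minPairCost_iUnion {c : E → E → ℝ≥0∞}
    (hc : LowerSemicontinuous fun p : E × E ↦ c p.1 p.2) (μ : Measure E) [IsProbabilityMeasure μ]
    {s : ℕ → Set ι} (hs : Monotone s) (i j : ι) :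
    minPairCost c μ (⋃ n, s n) i j = ⨆ n, minPairCost c μ (s n) i j := by
  refine le_antisymm (le_of_forall_gt fun a ha ↦ ?_)
    (iSup_le fun n ↦ minPairCost_mono c μ i j (Set.subset_iUnion s n))
  obtain ⟨b, hb, hba⟩ := exists_between ha
  let K (n : ℕ) : Set (ProbabilityMeasure (ι → E)) :=
    symmetricPlans (s n) μ ∩ {γ | ∫⁻ x, c (x i) (x j) ∂(γ : Measure (ι → E)) ≤ b}
  have hK_compact (n : ℕ) : IsCompact (K n) :=
    (isCompact_symmetricPlans (s n) μ).inter_right (isClosed_setOf_lintegral_pair_le hc i j b)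
  have hK_anti (n : ℕ) : K (n + 1) ⊆ K n := fun γ hγ ↦
    ⟨⟨hγ.1.1.mono (hs n.le_succ), hγ.1.2⟩, hγ.2⟩
  have hK_nonempty (n : ℕ) : (K n).Nonempty := by
    have hn : minPairCost c μ (s n) i j < b := (le_iSup _ n).trans_lt hb
    simp only [minPairCost, iInf_lt_iff] at hn
    obtain ⟨γ, hγ, hγb⟩ := hn
    exact ⟨γ, hγ, hγb.le⟩
  obtain ⟨γ, hγ⟩ := IsCompact.nonempty_iInter_of_sequence_nonempty_isCompact_isClosed K hK_anti
    hK_nonempty (hK_compact 0) fun n ↦ (hK_compact n).isClosed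
  rw [Set.mem_iInter] at hγ
  have hγ_plan : γ ∈ symmetricPlans (⋃ n, s n) μ :=
    ⟨(isSymmetricOn_iUnion hs).2 fun n ↦ (hγ n).1.1, (hγ 0).1.2⟩
  exact (iInf₂_le_of_le γ hγ_plan (hγ 0).2).trans_lt hba

end Compactness

theorem measurable_pair {ι E : Type*} [MeasurableSpace E] {c : E → E → ℝ≥0∞}
    (hc : Measurable fun p : E × E ↦ c p.1 p.2) (i j : ι) :
    Measurable fun x : ι → E ↦ c (x i) (x j) :=
  hc.comp (f := fun x : ι → E ↦ (x i, x j)) (by fun_prop)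

section Embedding

variable {ι κ E : Type*} {s : Set κ}

theorem setOf_viaEmbedding_ne_subset (f : κ ↪ ι) (τ : Equiv.Perm κ) :
    {i | τ.viaEmbedding f i ≠ i} ⊆ f '' {k | τ k ≠ k} := by
  intro i hi
  by_cases hif : i ∈ Set.range f
  · obtain ⟨k, rfl⟩ := hif
    exact ⟨k, fun hk ↦ hi (by rw [Equiv.Perm.viaEmbedding_apply, hk]), rfl⟩
  · exact absurd (Equiv.Perm.viaEmbedding_apply_of_notMem τ f i hif) hi

theorem exists_perm_semiconj_of_support_subset_range (f : κ ↪ ι) {σ : Equiv.Perm ι}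
    (hσ : {i | σ i ≠ i} ⊆ Set.range f) : ∃ τ : Equiv.Perm κ, ∀ k, f (τ k) = σ (f k) := by
  have hrange (i : ι) : σ i ∈ Set.range f ↔ i ∈ Set.range f := by
    by_cases hi : σ i = i
    · rw [hi]
    · exact iff_of_true (hσ fun h ↦ hi (σ.injective h)) (hσ hi)
  let e := Equiv.ofInjective f f.injective
  refine ⟨e.symm.permCongr (σ.subtypePerm hrange), fun k ↦ ?_⟩
  simp only [e, Equiv.permCongr_apply, Equiv.symm_symm, Equiv.apply_ofInjective_symm]
  rfl

variable [MeasurableSpace E] {μ : Measure E}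

theorem map_comp_embedding_mem_symmetricPlans (f : κ ↪ ι) {γ : ProbabilityMeasure (ι → E)}
    (hγ : γ ∈ symmetricPlans (f '' s) μ) :
    γ.map (f := fun x k ↦ x (f k)) (Measurable.aemeasurable (by fun_prop)) ∈
      symmetricPlans s μ := by
  refine ⟨fun τ hfin hτ ↦ ?_, fun k ↦ ?_⟩ <;> rw [ProbabilityMeasure.toMeasure_map]
  · have hsub := setOf_viaEmbedding_ne_subset f τ
    have hinv := hγ.1 (τ.viaEmbedding f) ((hfin.image f).subset hsub)
      (hsub.trans (Set.image_mono hτ))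
    conv_rhs => rw [← hinv]
    rw [Measure.map_map (by fun_prop) (by fun_prop), Measure.map_map (by fun_prop) (by fun_prop)]
    simp only [Function.comp_def, Equiv.Perm.viaEmbedding_apply]
  · rw [Measure.map_map (by fun_prop) (by fun_prop)]
    exact hγ.2 (f k)

/-- Transports a plan along an injection `f`, letting all the coordinates outside the range of `f`
be one common sample of `μ` that is independent of the original plan. -/
def extendPlan (f : κ → ι) (γ : Measure (κ → E)) (μ : Measure E) : Measure (ι → E) :=
  (γ.prod μ).map fun p ↦ Function.extend f p.1 fun _ ↦ p.2

theorem measurable_extend_const {f : κ → ι} (hf : Function.Injective f) :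
    Measurable fun p : (κ → E) × E ↦ Function.extend f p.1 fun _ ↦ p.2 := by
  refine measurable_pi_lambda _ fun i ↦ ?_
  by_cases hi : ∃ k, f k = i
  · obtain ⟨k, rfl⟩ := hi
    simp only [hf.extend_apply]
    fun_prop
  · simp only [Function.extend_apply' _ _ _ hi]
    fun_prop

theorem isSymmetricOn_extendPlan (f : κ ↪ ι) {γ : Measure (κ → E)} [SFinite γ] [SFinite μ]
    (hγ : IsSymmetricOn s γ) : IsSymmetricOn (f '' s) (extendPlan f γ μ) := by
  intro σ hfin hσ
  obtain ⟨τ, hτ⟩ := exists_perm_semiconj_of_support_subset_range f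
    (hσ.trans (Set.image_subset_range f s))
  have hsupp : {k | τ k ≠ k} = f ⁻¹' {i | σ i ≠ i} := by
    ext k
    simp [← hτ]
  have hτγ : γ.map (fun x k ↦ x (τ k)) = γ := by
    refine hγ τ (hsupp ▸ hfin.preimage f.injective.injOn) ?_
    rw [hsupp, ← Set.preimage_image_eq s f.injective]
    exact Set.preimage_mono hσ
  have hcomm : (fun (x : ι → E) i ↦ x (σ i)) ∘ (fun p ↦ Function.extend f p.1 fun _ ↦ p.2) =
      (fun p ↦ Function.extend f p.1 fun _ ↦ p.2) ∘
        Prod.map (fun (x : κ → E) k ↦ x (τ k)) (id : E → E) := by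
    ext p i
    by_cases hi : ∃ k, f k = i
    · obtain ⟨k, rfl⟩ := hi
      simp [← hτ, f.injective.extend_apply]
    · have hσi : σ i = i := by
        by_contra h
        exact hi (Set.image_subset_range f s (hσ h))
      simp [hσi, Function.extend_apply' _ _ _ hi]
  have hmeas := measurable_extend_const (E := E) f.injective
  calc (extendPlan f γ μ).map (fun x i ↦ x (σ i))
      = ((γ.map fun x k ↦ x (τ k)).prod (μ.map id)).map
          (fun p ↦ Function.extend f p.1 fun _ ↦ p.2) := by
        rw [extendPlan, Measure.map_map (by fun_prop) hmeas, hcomm,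
          ← Measure.map_map hmeas (by fun_prop),
          Measure.map_prod_map _ _ (by fun_prop) measurable_id]
    _ = extendPlan f γ μ := by rw [hτγ, Measure.map_id, extendPlan]

variable [IsProbabilityMeasure μ]

theorem map_extendPlan_eval (f : κ ↪ ι) {γ : Measure (κ → E)} [IsProbabilityMeasure γ]
    (hγ : ∀ k, γ.map (fun x ↦ x k) = μ) (i : ι) :
    (extendPlan f γ μ).map (fun x ↦ x i) = μ := by
  rw [extendPlan, Measure.map_map (measurable_pi_apply i) (measurable_extend_const f.injective)]
  by_cases hi : ∃ k, f k = i
  · obtain ⟨k, rfl⟩ := hi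
    simp only [Function.comp_def, f.injective.extend_apply]
    calc (γ.prod μ).map (fun p ↦ p.1 k) = (γ.prod μ).fst.map (fun x ↦ x k) :=
          (Measure.map_map (measurable_pi_apply k) measurable_fst).symm
      _ = μ := by rw [Measure.fst_prod, hγ k]
  · simp only [Function.comp_def, Function.extend_apply' _ _ _ hi]
    exact Measure.snd_prod

theorem minPairCost_image {c : E → E → ℝ≥0∞} (hc : Measurable fun p : E × E ↦ c p.1 p.2)
    (f : κ ↪ ι) (k l : κ) :
    minPairCost c μ (f '' s) (f k) (f l) = minPairCost c μ s k l := by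
  refine le_antisymm (le_iInf₂ fun γ hγ ↦ ?_) (le_iInf₂ fun γ hγ ↦ ?_)
  · have hmeas := measurable_extend_const (E := E) f.injective
    have hprob : IsProbabilityMeasure (extendPlan f (γ : Measure (κ → E)) μ) :=
      Measure.isProbabilityMeasure_map hmeas.aemeasurable
    refine iInf₂_le_of_le ⟨_, hprob⟩
      ⟨isSymmetricOn_extendPlan f hγ.1, map_extendPlan_eval f hγ.2⟩ (le_of_eq ?_)
    rw [ProbabilityMeasure.coe_mk, extendPlan, lintegral_map (measurable_pair hc _ _) hmeas]
    simp only [f.injective.extend_apply]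
    rw [lintegral_prod _ (by fun_prop)]
    simp
  · refine iInf₂_le_of_le _ (map_comp_embedding_mem_symmetricPlans f hγ) (le_of_eq ?_)
    rw [ProbabilityMeasure.toMeasure_map, lintegral_map (measurable_pair hc k l) (by fun_prop)]

end Embedding

section PairSum

theorem sum_sum_ite_lt_one (N : ℕ) :
    (∑ i : Fin N, ∑ j : Fin N, if i < j then 1 else 0) = N.choose 2 := by
  induction N with
  | zero => simp
  | succ n ih =>
    simp only [Fin.sum_univ_succ (n := n), Fin.succ_lt_succ_iff, Fin.succ_pos, if_true]
    rw [Nat.choose_succ_succ, ← ih]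
    simp

variable {E : Type*} [MeasurableSpace E] {c : E → E → ℝ≥0∞}

theorem IsSymmetricOn.lintegral_pair_eq {ι : Type*} [Finite ι] {γ : Measure (ι → E)}
    (hγ : IsSymmetricOn Set.univ γ) (hc : Measurable fun p : E × E ↦ c p.1 p.2) {i j k l : ι}
    (hij : i ≠ j) (hkl : k ≠ l) : ∫⁻ x, c (x i) (x j) ∂γ = ∫⁻ x, c (x k) (x l) ∂γ := by
  classical
  obtain ⟨σ, rfl, rfl⟩ : ∃ σ : Equiv.Perm ι, σ k = i ∧ σ l = j :=
    MulAction.is_two_pretransitive_iff.1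
      (Equiv.Perm.isMultiplyPretransitive ι 2) hkl hij
  conv_rhs => rw [← hγ σ (Set.toFinite _) (Set.subset_univ _)]
  rw [lintegral_map (measurable_pair hc k l) (by fun_prop)]

theorem IsSymmetricOn.lintegral_sum_pairs_eq {N : ℕ} {γ : Measure (Fin N → E)}
    (hγ : IsSymmetricOn Set.univ γ) (hc : Measurable fun p : E × E ↦ c p.1 p.2) {k l : Fin N}
    (hkl : k ≠ l) :
    ∫⁻ x, ∑ i, ∑ j, (if i < j then c (x i) (x j) else 0) ∂γ =
      N.choose 2 * ∫⁻ x, c (x k) (x l) ∂γ := by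
  have hmeas (i j : Fin N) : Measurable fun x : Fin N → E ↦ if i < j then c (x i) (x j) else 0 :=
    Measurable.ite (.const _) (measurable_pair hc i j) measurable_const
  have hterm (i j : Fin N) : ∫⁻ x, (if i < j then c (x i) (x j) else 0) ∂γ =
      (if i < j then 1 else 0) * ∫⁻ x, c (x k) (x l) ∂γ := by
    split_ifs with hij
    · rw [one_mul, hγ.lintegral_pair_eq hc hij.ne hkl]
    · simp
  calc ∫⁻ x, ∑ i, ∑ j, (if i < j then c (x i) (x j) else 0) ∂γ
      = ∑ i, ∑ j, ∫⁻ x, (if i < j then c (x i) (x j) else 0) ∂γ := by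
        rw [lintegral_finsetSum _ fun i _ ↦ Finset.measurable_fun_sum _ fun j _ ↦ hmeas i j]
        exact Finset.sum_congr rfl fun i _ ↦ lintegral_finsetSum _ fun j _ ↦ hmeas i j
    _ = N.choose 2 * ∫⁻ x, c (x k) (x l) ∂γ := by
        simp only [hterm, ← Finset.sum_mul, ← sum_sum_ite_lt_one N]
        push_cast
        rfl

theorem minMeanPairCost_eq_minPairCost (hc : Measurable fun p : E × E ↦ c p.1 p.2)
    (μ : Measure E) {N : ℕ} {k l : Fin N} (hkl : k ≠ l) :
    minMeanPairCost N c μ = minPairCost c μ Set.univ k l := by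
  have hN : N.choose 2 ≠ 0 := by
    have := Fin.val_ne_of_ne hkl
    exact (Nat.choose_pos (by lia)).ne'
  have hsum : ⨅ γ ∈ symmetricPlans (Set.univ : Set (Fin N)) μ,
        ∫⁻ x, ∑ i, ∑ j, (if i < j then c (x i) (x j) else 0) ∂(γ : Measure (Fin N → E)) =
      ⨅ γ ∈ symmetricPlans (Set.univ : Set (Fin N)) μ,
        N.choose 2 * ∫⁻ x, c (x k) (x l) ∂(γ : Measure (Fin N → E)) :=
    iInf_congr fun γ ↦ iInf_congr fun hγ ↦ hγ.1.lintegral_sum_pairs_eq hc hkl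
  have hpos : (N.choose 2 : ℝ≥0∞) ≠ 0 := Nat.cast_ne_zero.2 hN
  have htop : (N.choose 2 : ℝ≥0∞) ≠ ⊤ := ENNReal.natCast_ne_top _
  rw [minMeanPairCost, hsum, minPairCost]
  simp only [← ENNReal.mul_iInf_of_ne hpos htop]
  rw [← mul_assoc, ENNReal.inv_mul_cancel hpos htop, one_mul]

end PairSum

theorem N_body_cost_approaches_infinite_body_cost_lsc_general {E : Type*} [TopologicalSpace E]
    [PolishSpace E] [MeasurableSpace E] [BorelSpace E] (c : E → E → ℝ≥0∞)
    (hc : LowerSemicontinuous fun p : E × E ↦ c p.1 p.2) (μ : Measure E) [IsProbabilityMeasure μ] :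
    Tendsto (fun N ↦ minMeanPairCost N c μ) atTop
      (𝓝 (minPairCost c μ (Set.univ : Set ℕ) 0 1)) := by
  have hmono : Monotone fun N : ℕ ↦ Set.Iio (N + 2) := fun M N hMN ↦
    Set.Iio_subset_Iio (by gcongr)
  have hunion : ⋃ N : ℕ, Set.Iio (N + 2) = Set.univ :=
    Set.iUnion_eq_univ_iff.2 fun n ↦ ⟨n, by simp⟩
  have hfinite (N : ℕ) :
      minMeanPairCost (N + 2) c μ = minPairCost c μ (Set.Iio (N + 2)) 0 1 := by
    rw [minMeanPairCost_eq_minPairCost hc.measurable μ (zero_ne_one' (Fin (N + 2))),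
      ← minPairCost_image hc.measurable Fin.valEmbedding, Set.image_univ]
    simp
  rw [← tendsto_add_atTop_iff_nat 2, ← hunion, minPairCost_iUnion hc μ hmono]
  simp only [hfinite]
  exact tendsto_atTop_iSup fun M N hMN ↦ minPairCost_mono c μ 0 1 (hmono hMN)

section Euclidean

variable {d : ℕ} (c : Ed d → Ed d → ℝ≥0∞) (μ : Measure (Ed d))

theorem FNOT_eq_minMeanPairCost (N : ℕ) : FNOT N c μ = minMeanPairCost N c μ := by
  have hsymm (γ : Measure (Fin N → Ed d)) : IsSymmetricN γ ↔ IsSymmetricOn Set.univ γ := by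
    simp [IsSymmetricN, IsSymmetricOn, Set.toFinite]
  simp only [FNOT, minMeanPairCost, pairCost, symmetricPlans, hsymm, Set.mem_ofPred_eq, iInf_and]
  congr 1
  exact iInf_subtype'

theorem FinfOT_eq_minPairCost : FinfOT c μ = minPairCost c μ Set.univ 0 1 := by
  have hexch (γ : Measure (ℕ → Ed d)) : IsExchangeable γ ↔ IsSymmetricOn Set.univ γ := by
    simp [IsExchangeable, IsSymmetricOn]
  simp only [FinfOT, Cinf, HasMarginal, minPairCost, symmetricPlans, hexch, Set.mem_ofPred_eq,
    iInf_and]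
  exact iInf_subtype'

end Euclidean

/-- Theorem 1.2, lower semi-continuous case: for a symmetric Borel lower
semi-continuous cost `c : ℝ^d × ℝ^d → [0,∞]`, if some exchangeable probability
measure with marginal `μ` has finite cost, then `F_N^OT[μ] → F_∞^OT[μ]`. -/
theorem N_body_cost_approaches_infinite_body_cost_lsc
    {d : ℕ} (c : Ed d → Ed d → ℝ≥0∞)
    (hmeas : Measurable fun p : Ed d × Ed d => c p.1 p.2)
    (hsymm : ∀ x y, c x y = c y x)
    (hlsc : LowerSemicontinuous fun p : Ed d × Ed d => c p.1 p.2)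
    (μ : Measure (Ed d)) [IsProbabilityMeasure μ]
    (hex : ∃ γ₀ : Measure (ℕ → Ed d), IsProbabilityMeasure γ₀ ∧ IsExchangeable γ₀ ∧
      HasMarginal γ₀ μ ∧ Cinf c γ₀ < ⊤) :
    Tendsto (fun N : ℕ => FNOT N c μ) atTop (𝓝 (FinfOT c μ)) := by
  simpa only [FNOT_eq_minMeanPairCost, FinfOT_eq_minPairCost] using
    N_body_cost_approaches_infinite_body_cost_lsc_general c hlsc μ
end
end

section
/- Let c : ℝ^d × ℝ^d → [0,∞] be Borel measurable and symmetric, and let μ be a Borel probability measure on ℝ^d. Then F_∞^OT[μ] = inf { ∫_{ℝ^d×ℝ^d} c(x,y) dμ₂(x,y) : μ₂ = ∫_{P(ℝ^d)} Q⊗Q dν(Q) and μ = ∫_{P(ℝ^d)} Q dν(Q) for some Borel probability measure ν on the space P(ℝ^d) of Borel probability measures on ℝ^d }. Moreover, γ = ∫ Q^⊗∞ dν(Q) is a minimizer of C_∞ over { γ ∈ P_sym^∞(ℝ^d) : γ ↦ μ } if and only if μ₂ = ∫ Q⊗Q dν(Q) attains the infimum above. -/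
open MeasureTheory ENNReal Filter Topology ProbabilityTheory

noncomputable section

/-- `μ₂` is the mixture `∫ Q ⊗ Q dν(Q)` of product measures. -/
def IsMixtureOfSquares {d : ℕ} (μ₂ : Measure (Ed d × Ed d))
    (ν : Measure (Measure (Ed d))) : Prop :=
  ∀ s : Set (Ed d × Ed d), MeasurableSet s → μ₂ s = ∫⁻ Q, (Q.prod Q) s ∂ν

/-- `μ` is the mixture (barycenter) `∫ Q dν(Q)`. -/
def IsMixture {d : ℕ} (μ : Measure (Ed d)) (ν : Measure (Measure (Ed d))) : Prop :=
  ∀ s : Set (Ed d), MeasurableSet s → μ s = ∫⁻ Q, Q s ∂ν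

/-- `γ` is the mixture `∫ Q^⊗∞ dν(Q)` of infinite product measures, characterized
through its finite-dimensional marginals. -/
def IsMixtureOfInfinitePowers {d : ℕ} (γ : Measure (ℕ → Ed d))
    (ν : Measure (Measure (Ed d))) : Prop :=
  ∀ n : ℕ, ∀ s : Set (Fin n → Ed d), MeasurableSet s →
    γ.map (fun x (i : Fin n) => x i.val) s = ∫⁻ Q, Measure.pi (fun _ : Fin n => Q) s ∂ν

/-- `ν` is a Borel probability measure on the space `P(ℝ^d)` of Borel probability
measures on `ℝ^d`. -/
def IsProbOnProb {d : ℕ} (ν : Measure (Measure (Ed d))) : Prop :=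
  IsProbabilityMeasure ν ∧ ∀ᵐ Q ∂ν, IsProbabilityMeasure Q

/-!
Let `γ` be exchangeable, `T` the shift, and `κ` the conditional law of `x 0` given `T x`.
Exchangeability says that `x 0` is related to `T x` in the same way as to `T (T x)`, which gives
`∫ κ(x)(A)² = ∫ κ(x)(A) κ(T x)(A)`; together with stationarity this forces `κ(T x)(A) = κ(x)(A)`
almost surely. Conditioning on one coordinate after the other then yields
`γ (A₀ × ⋯ × Aₙ₋₁ × X × ⋯) = ∫ κ(x)(A₀) ⋯ κ(x)(Aₙ₋₁) dγ(x)`, which is de Finetti's theorem with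
mixing measure the law of `κ` under `γ`. Conversely a mixture of infinite powers is exchangeable.
The cost only sees the first two coordinates, and their joint law is `∫ Q ⊗ Q dν(Q)`.
-/

section

open Function

variable {Ω X Y Z : Type*} [MeasurableSpace Ω] [MeasurableSpace X] [MeasurableSpace Y]
  [MeasurableSpace Z]

/-! ### Mixtures of measures -/

/-- `m` is the mixture `∫ κ ω dν(ω)`. Unlike `m = ν.bind κ`, this does not fall back to a junk
value when `κ` is not measurable. -/
def IsMixtureOf (m : Measure Y) (ν : Measure Ω) (κ : Ω → Measure Y) : Prop :=
  ∀ s : Set Y, MeasurableSet s → m s = ∫⁻ ω, κ ω s ∂ν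

namespace IsMixtureOf

variable {m m' : Measure Y} {ν : Measure Ω} {κ κ' : Ω → Measure Y}

theorem unique (h : IsMixtureOf m ν κ) (h' : IsMixtureOf m' ν κ) : m = m' :=
  Measure.ext fun s hs ↦ (h s hs).trans (h' s hs).symm

theorem congr (h : IsMixtureOf m ν κ) (hκ : κ =ᵐ[ν] κ') : IsMixtureOf m ν κ' := fun s hs ↦
  (h s hs).trans <| lintegral_congr_ae <| hκ.fun_comp fun Q ↦ Q s

theorem map (h : IsMixtureOf m ν κ) {f : Y → Z} (hf : Measurable f) :
    IsMixtureOf (m.map f) ν fun ω ↦ (κ ω).map f := fun s hs ↦ by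
  simpa only [Measure.map_apply hf hs] using h _ (hf hs)

end IsMixtureOf

theorem isMixtureOf_bind {ν : Measure Ω} {κ : Ω → Measure Y} (hκ : AEMeasurable κ ν) :
    IsMixtureOf (ν.bind κ) ν κ := fun _ hs ↦ Measure.bind_apply hs hκ

/-! ### Finite and infinite powers of a measure -/

theorem infinitePi_map_comp_of_injective {ι κ : Type*} (μ : κ → Measure X)
    [∀ k, IsProbabilityMeasure (μ k)] {f : ι → κ} (hf : Injective f) :
    (Measure.infinitePi μ).map (fun x i ↦ x (f i)) = Measure.infinitePi fun i ↦ μ (f i) := by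
  classical
  refine Measure.eq_infinitePi _ fun s t ht ↦ ?_
  have preimage_box : (fun (x : κ → X) i ↦ x (f i)) ⁻¹' (s : Set ι).pi t =
      (s.map ⟨f, hf⟩ : Set κ).pi (extend f t fun _ ↦ Set.univ) := by
    ext x
    simp [hf.extend_apply]
  rw [Measure.map_apply (by fun_prop) (.pi s.countable_toSet fun i _ ↦ ht i), preimage_box,
    Measure.infinitePi_pi _ (by simpa [hf.extend_apply] using fun i _ ↦ ht i), Finset.prod_map]
  simp [hf.extend_apply]

theorem pi_map_comp_of_injective {ι κ : Type*} [Fintype ι] [Fintype κ] (μ : κ → Measure X)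
    [∀ k, IsProbabilityMeasure (μ k)] {f : ι → κ} (hf : Injective f) :
    (Measure.pi μ).map (fun x i ↦ x (f i)) = Measure.pi fun i ↦ μ (f i) := by
  simpa only [Measure.infinitePi_eq_pi] using infinitePi_map_comp_of_injective μ hf

theorem infinitePi_const_of_not_isProbabilityMeasure {ι : Type*} [Nonempty ι] {Q : Measure X}
    (hQ : ¬IsProbabilityMeasure Q) : Measure.infinitePi (fun _ : ι ↦ Q) = 0 :=
  dif_neg (by simpa using hQ)

theorem infinitePi_const_pi {ι : Type*} [Nonempty ι] (Q : Measure X) (s : Finset ι)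
    {t : ι → Set X} (ht : ∀ i, MeasurableSet (t i)) :
    Measure.infinitePi (fun _ : ι ↦ Q) ((s : Set ι).pi t) =
      {Q : Measure X | IsProbabilityMeasure Q}.indicator (fun Q ↦ ∏ i ∈ s, Q (t i)) Q := by
  by_cases hQ : IsProbabilityMeasure Q
  · rw [Measure.infinitePi_pi _ fun i _ ↦ ht i, Set.indicator_of_mem (by exact hQ)]
  · rw [infinitePi_const_of_not_isProbabilityMeasure hQ, Set.indicator_of_notMem (by exact hQ),
      Measure.coe_zero, Pi.zero_apply]

theorem measurable_infinitePi_const {ι : Type*} [Nonempty ι] :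
    Measurable fun Q : Measure X ↦ Measure.infinitePi fun _ : ι ↦ Q := by
  have measurable_apply_box (s : Finset ι) {t : ι → Set X} (ht : ∀ i, MeasurableSet (t i)) :
      Measurable fun Q : Measure X ↦ Measure.infinitePi (fun _ : ι ↦ Q) ((s : Set ι).pi t) := by
    simp only [infinitePi_const_pi _ s ht]
    exact (Finset.measurable_fun_prod s fun i _ ↦ Measure.measurable_coe (ht i)).indicator
      ProbabilityMeasure.measurableSet_isProbabilityMeasure
  have isFiniteMeasure (Q : Measure X) : IsFiniteMeasure (Measure.infinitePi fun _ : ι ↦ Q) := by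
    by_cases hQ : IsProbabilityMeasure Q
    · infer_instance
    · rw [infinitePi_const_of_not_isProbabilityMeasure hQ]
      infer_instance
  refine Measurable.measure_of_isPiSystem generateFrom_squareCylinders.symm
    (isPiSystem_squareCylinders (fun _ ↦ MeasurableSpace.isPiSystem_measurableSet) (by simp))
    ?_ (by simpa using measurable_apply_box ∅ (t := fun _ ↦ Set.univ) (by simp))
  rintro _ ⟨s, t, ht, rfl⟩
  exact measurable_apply_box s fun i ↦ ht i (Set.mem_univ i)

/-! ### Mixtures of infinite powers -/

/-- `ν` is a law on probability measures, i.e. an element of `P(P(X))`, encoded as a measure on all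
measures that is carried by the probability measures. -/
def IsMixingMeasure (ν : Measure (Measure X)) : Prop :=
  IsProbabilityMeasure ν ∧ ∀ᵐ Q ∂ν, IsProbabilityMeasure Q

/-- `γ` is the mixture `∫ Q^⊗∞ dν(Q)`, encoded through the laws of the first `n` coordinates. -/
def IsPowerMixture (γ : Measure (ℕ → X)) (ν : Measure (Measure X)) : Prop :=
  ∀ n : ℕ, IsMixtureOf (γ.map fun x (i : Fin n) ↦ x i.val) ν fun Q ↦ Measure.pi fun _ : Fin n ↦ Q

/-- The law `γ` of a sequence is invariant under permutations of finitely many coordinates. -/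
def Exchangeable (γ : Measure (ℕ → X)) : Prop :=
  ∀ σ : Equiv.Perm ℕ, {n : ℕ | σ n ≠ n}.Finite → γ.map (fun x n ↦ x (σ n)) = γ

namespace IsPowerMixture

variable {γ : Measure (ℕ → X)} {ν : Measure (Measure X)}

theorem map_comp_of_injective (hγ : IsPowerMixture γ ν) (hν : ∀ᵐ Q ∂ν, IsProbabilityMeasure Q)
    {ι : Type*} [Fintype ι] {f : ι → ℕ} (hf : Injective f) :
    IsMixtureOf (γ.map fun x i ↦ x (f i)) ν fun Q ↦ Measure.pi fun _ : ι ↦ Q := by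
  have lt_bound (i : ι) : f i < Finset.univ.sup f + 1 :=
    Nat.lt_succ_of_le (Finset.le_sup (Finset.mem_univ i))
  let g (i : ι) : Fin (Finset.univ.sup f + 1) := ⟨f i, lt_bound i⟩
  have hg : Injective g := fun i j hij ↦ hf (congrArg Fin.val hij)
  have h := (hγ _).map (f := fun x i ↦ x (g i)) (by fun_prop)
  rw [Measure.map_map (by fun_prop) (by fun_prop)] at h
  refine h.congr ?_
  filter_upwards [hν] with Q _ using pi_map_comp_of_injective (fun _ ↦ Q) hg

theorem isProbabilityMeasure [IsProbabilityMeasure ν] (hγ : IsPowerMixture γ ν) :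
    IsProbabilityMeasure γ := by
  have h := hγ 0 Set.univ .univ
  rw [Measure.map_apply (by fun_prop) .univ] at h
  exact ⟨by simpa using h⟩

theorem exchangeable [IsFiniteMeasure γ] (hγ : IsPowerMixture γ ν)
    (hν : ∀ᵐ Q ∂ν, IsProbabilityMeasure Q) : Exchangeable γ := fun σ _ ↦ by
  refine IsProjectiveLimit.unique (P := fun I : Finset ℕ ↦ γ.map I.restrict) (fun I ↦ ?_)
    fun _ ↦ rfl
  rw [Measure.map_map (Finset.measurable_restrict I) (by fun_prop)]
  exact (hγ.map_comp_of_injective hν (σ.injective.comp Subtype.val_injective)).unique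
    (hγ.map_comp_of_injective hν (f := fun i : I ↦ i.val) Subtype.val_injective)

theorem map_eval (hγ : IsPowerMixture γ ν) (hν : ∀ᵐ Q ∂ν, IsProbabilityMeasure Q) (n : ℕ) :
    IsMixtureOf (γ.map fun x ↦ x n) ν id := by
  have h := (hγ (n + 1)).map (measurable_pi_apply (Fin.last n))
  rw [Measure.map_map (by fun_prop) (by fun_prop)] at h
  refine h.congr ?_
  filter_upwards [hν] with Q _ using (measurePreserving_eval (fun _ ↦ Q) (Fin.last n)).map_eq

theorem map_pair (hγ : IsPowerMixture γ ν) (hν : ∀ᵐ Q ∂ν, IsProbabilityMeasure Q) :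
    IsMixtureOf (γ.map fun x ↦ (x 0, x 1)) ν fun Q ↦ Q.prod Q := by
  have h := (hγ 2).map MeasurableEquiv.finTwoArrow.measurable
  rw [Measure.map_map (MeasurableEquiv.measurable _) (by fun_prop)] at h
  refine h.congr ?_
  filter_upwards [hν] with Q _ using (measurePreserving_finTwoArrow Q).map_eq

theorem lintegral_pair_eq (hγ : IsPowerMixture γ ν) (hν : ∀ᵐ Q ∂ν, IsProbabilityMeasure Q)
    {μ₂ : Measure (X × X)} (hμ₂ : IsMixtureOf μ₂ ν fun Q ↦ Q.prod Q) {c : X × X → ℝ≥0∞}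
    (hc : Measurable c) : ∫⁻ x, c (x 0, x 1) ∂γ = ∫⁻ p, c p ∂μ₂ := by
  rw [hμ₂.unique (hγ.map_pair hν), lintegral_map hc (by fun_prop)]

end IsPowerMixture

theorem exists_isPowerMixture {ν : Measure (Measure X)} (hν : ∀ᵐ Q ∂ν, IsProbabilityMeasure Q) :
    ∃ γ : Measure (ℕ → X), IsPowerMixture γ ν := by
  refine ⟨ν.bind fun Q ↦ Measure.infinitePi fun _ : ℕ ↦ Q, fun n ↦ ?_⟩
  refine ((isMixtureOf_bind measurable_infinitePi_const.aemeasurable).map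
    (f := fun x (i : Fin n) ↦ x i.val) (by fun_prop)).congr ?_
  filter_upwards [hν] with Q _
  rw [infinitePi_map_comp_of_injective (fun _ : ℕ ↦ Q) Fin.val_injective,
    Measure.infinitePi_eq_pi]

theorem isPowerMixture_of_forall_box {γ : Measure (ℕ → X)} [IsFiniteMeasure γ]
    {ν : Measure (Measure X)} (hν : ∀ᵐ Q ∂ν, IsProbabilityMeasure Q)
    (hγ : ∀ (n : ℕ) (A : Fin n → Set X), (∀ i, MeasurableSet (A i)) →
      γ.map (fun x (i : Fin n) ↦ x i.val) (Set.univ.pi A) = ∫⁻ Q, ∏ i, Q (A i) ∂ν) :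
    IsPowerMixture γ ν := fun n ↦ by
  obtain ⟨γ', hγ'⟩ := exists_isPowerMixture hν
  have map_apply_box (A : Fin n → Set X) (hA : ∀ i, MeasurableSet (A i)) :
      γ.map (fun x (i : Fin n) ↦ x i.val) (Set.univ.pi A) =
        γ'.map (fun x (i : Fin n) ↦ x i.val) (Set.univ.pi A) := by
    rw [hγ n A hA, hγ' n _ (.univ_pi hA)]
    refine lintegral_congr_ae ?_
    filter_upwards [hν] with Q _ using (Measure.pi_pi _ A).symm
  have map_eq : γ.map (fun x (i : Fin n) ↦ x i.val) = γ'.map fun x i ↦ x i.val := by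
    refine ext_of_generate_finite _ generateFrom_pi.symm isPiSystem_pi ?_ ?_
    · rintro _ ⟨A, hA, rfl⟩
      exact map_apply_box A fun i ↦ hA i (Set.mem_univ i)
    · simpa using map_apply_box (fun _ ↦ Set.univ) fun _ ↦ .univ
  exact map_eq ▸ hγ' n

/-! ### De Finetti's theorem -/

theorem exists_perm_finite_support_eqOn {α : Type*} {f : α → α} (hf : Injective f)
    (s : Finset α) : ∃ σ : Equiv.Perm α, {a | σ a ≠ a}.Finite ∧ ∀ a ∈ s, σ a = f a := by
  classical
  let t : Finset α := s ∪ s.image f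
  let incl (a : s) : t := ⟨a, Finset.mem_union_left _ a.2⟩
  let image (a : s) : t := ⟨f a, Finset.mem_union_right _ (Finset.mem_image_of_mem f a.2)⟩
  obtain ⟨τ, hτ⟩ := Equiv.Perm.exists_extending_pair incl image
    (fun a b h ↦ Subtype.ext (congrArg (fun c : t ↦ c.val) h))
    (fun a b h ↦ Subtype.ext (hf (congrArg (fun c : t ↦ c.val) h)))
  refine ⟨Equiv.Perm.ofSubtype τ, t.finite_toSet.subset fun a ha ↦ ?_, fun a ha ↦ ?_⟩
  · by_contra hat
    exact ha (Equiv.Perm.ofSubtype_apply_of_not_mem τ hat)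
  · rw [Equiv.Perm.ofSubtype_apply_of_mem τ (incl ⟨a, ha⟩).2]
    exact congrArg Subtype.val (hτ ⟨a, ha⟩)

theorem ennreal_two_mul_le_mul_self_add_mul_self (a b : ℝ≥0∞) : 2 * (a * b) ≤ a * a + b * b := by
  rcases eq_or_ne a ∞ with rfl | ha
  · simp
  rcases eq_or_ne b ∞ with rfl | hb
  · simp
  lift a to NNReal using ha
  lift b to NNReal using hb
  norm_cast
  linarith [two_mul_le_add_sq a b, sq a, sq b]

theorem eq_of_ennreal_two_mul_eq_mul_self_add_mul_self {a b : ℝ≥0∞} (hab : a * b ≠ ∞)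
    (h : 2 * (a * b) = a * a + b * b) : a = b := by
  have sq_ne_top : a * a + b * b ≠ ∞ := h ▸ ENNReal.mul_ne_top ENNReal.ofNat_ne_top hab
  have a_ne_top : a ≠ ∞ := by rintro rfl; simp at sq_ne_top
  have b_ne_top : b ≠ ∞ := by rintro rfl; simp at sq_ne_top
  lift a to NNReal using a_ne_top
  lift b to NNReal using b_ne_top
  norm_cast at h ⊢
  have sq_sub_eq_zero : ((a : ℝ) - b) ^ 2 = 0 := by
    linarith [congrArg NNReal.toReal h, NNReal.coe_add (a * a) (b * b)]
  exact NNReal.coe_injective (sub_eq_zero.mp (pow_eq_zero_iff two_ne_zero |>.mp sq_sub_eq_zero))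

theorem ae_eq_of_lintegral_mul_self_eq_lintegral_mul {m : Measure Ω} {f g : Ω → ℝ≥0∞}
    (hf : AEMeasurable f m) (hg : AEMeasurable g m) (hfg : ∫⁻ ω, f ω * g ω ∂m ≠ ∞)
    (hff : ∫⁻ ω, f ω * f ω ∂m = ∫⁻ ω, f ω * g ω ∂m)
    (hgg : ∫⁻ ω, g ω * g ω ∂m = ∫⁻ ω, f ω * g ω ∂m) : f =ᵐ[m] g := by
  have two_mul_ae_eq : (fun ω ↦ 2 * (f ω * g ω)) =ᵐ[m] fun ω ↦ f ω * f ω + g ω * g ω := by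
    have lintegral_two_mul : ∫⁻ ω, 2 * (f ω * g ω) ∂m = 2 * ∫⁻ ω, f ω * g ω ∂m :=
      lintegral_const_mul'' 2 (by fun_prop)
    refine ae_eq_of_ae_le_of_lintegral_le
      (ae_of_all _ fun ω ↦ ennreal_two_mul_le_mul_self_add_mul_self (f ω) (g ω)) ?_ (by fun_prop) ?_
    · rw [lintegral_two_mul]
      finiteness
    · rw [lintegral_two_mul, lintegral_add_left' (by fun_prop), hff, hgg, two_mul]
  filter_upwards [two_mul_ae_eq, ae_lt_top' (by fun_prop) hfg] with ω hω mul_lt_top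
  exact eq_of_ennreal_two_mul_eq_mul_self_add_mul_self mul_lt_top.ne hω

/-- The one-sided shift on sequences, which forgets the `0`-th term. -/
def shift (x : ℕ → X) : ℕ → X := fun n ↦ x (n + 1)

theorem measurable_shift : Measurable (shift (X := X)) := by
  unfold shift
  fun_prop

/-- The conditional law of the `0`-th term of a sequence with law `γ` given all later terms. -/
def headGivenTail [StandardBorelSpace X] [Nonempty X] (γ : Measure (ℕ → X)) [IsFiniteMeasure γ] :
    Kernel (ℕ → X) X :=
  condDistrib (fun x ↦ x 0) shift γ

instance [StandardBorelSpace X] [Nonempty X] (γ : Measure (ℕ → X)) [IsFiniteMeasure γ] :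
    IsMarkovKernel (headGivenTail γ) := by
  unfold headGivenTail
  infer_instance

namespace Exchangeable

variable {γ : Measure (ℕ → X)} [IsFiniteMeasure γ]

theorem measurePreserving_comp_of_injective (hγ : Exchangeable γ) {f : ℕ → ℕ} (hf : Injective f) :
    MeasurePreserving (fun x n ↦ x (f n)) γ γ := by
  refine ⟨by fun_prop, IsProjectiveLimit.unique (P := fun I : Finset ℕ ↦ γ.map I.restrict)
    (fun I ↦ ?_) fun _ ↦ rfl⟩
  obtain ⟨σ, hσ, hσf⟩ := exists_perm_finite_support_eqOn hf I
  have restrict_comp_eq : I.restrict ∘ (fun (x : ℕ → X) n ↦ x (f n)) =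
      I.restrict ∘ fun (x : ℕ → X) n ↦ x (σ n) := by
    ext x i
    simp [hσf i i.2]
  have map_restrict := congrArg (Measure.map I.restrict) (hγ σ hσ)
  rw [Measure.map_map (Finset.measurable_restrict I) (by fun_prop)] at map_restrict ⊢
  rwa [restrict_comp_eq]

theorem measurePreserving_shift (hγ : Exchangeable γ) : MeasurePreserving shift γ γ :=
  hγ.measurePreserving_comp_of_injective (add_left_injective 1)

variable {A : Set X} {h : (ℕ → X) → ℝ≥0∞}

theorem lintegral_indicator_mul_comp_shift_shift (hγ : Exchangeable γ) (hA : MeasurableSet A)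
    (hh : Measurable h) :
    ∫⁻ x, A.indicator 1 (x 0) * h (shift (shift x)) ∂γ =
      ∫⁻ x, A.indicator 1 (x 0) * h (shift x) ∂γ := by
  let skipOne (n : ℕ) : ℕ := if n = 0 then 0 else n + 1
  have skipOne_injective : Injective skipOne := fun a b hab ↦ by
    simp only [skipOne] at hab
    split_ifs at hab <;> omega
  have hind : Measurable (A.indicator (1 : X → ℝ≥0∞)) := measurable_one.indicator hA
  exact (hγ.measurePreserving_comp_of_injective skipOne_injective).lintegral_comp
    (f := fun x ↦ A.indicator 1 (x 0) * h (shift x))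
    ((hind.comp (measurable_pi_apply 0)).mul (hh.comp measurable_shift))

variable [StandardBorelSpace X] [Nonempty X]

theorem lintegral_indicator_mul_comp_shift (hγ : Exchangeable γ) (hA : MeasurableSet A)
    (hh : Measurable h) :
    ∫⁻ x, A.indicator 1 (x 0) * h (shift x) ∂γ = ∫⁻ x, headGivenTail γ x A * h x ∂γ := by
  have disintegration : γ ⊗ₘ headGivenTail γ = γ.map fun x ↦ (shift x, x 0) := by
    have h : γ.map shift ⊗ₘ headGivenTail γ = γ.map fun x ↦ (shift x, x 0) :=
      compProd_map_condDistrib (measurable_pi_apply 0).aemeasurable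
    rwa [hγ.measurePreserving_shift.map_eq] at h
  have hind : Measurable (A.indicator (1 : X → ℝ≥0∞)) := measurable_one.indicator hA
  calc ∫⁻ x, A.indicator 1 (x 0) * h (shift x) ∂γ
      = ∫⁻ p, A.indicator 1 p.2 * h p.1 ∂(γ.map fun x ↦ (shift x, x 0)) := by
        rw [lintegral_map (by fun_prop) (measurable_shift.prodMk (measurable_pi_apply 0))]
    _ = ∫⁻ x, ∫⁻ a, A.indicator 1 a * h x ∂(headGivenTail γ x) ∂γ := by
        rw [← disintegration, Measure.lintegral_compProd (by fun_prop)]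
    _ = ∫⁻ x, headGivenTail γ x A * h x ∂γ := by
        simp only [lintegral_mul_const _ hind, lintegral_indicator_one hA]

theorem headGivenTail_comp_shift_ae_eq (hγ : Exchangeable γ) (hA : MeasurableSet A) :
    (fun x ↦ headGivenTail γ (shift x) A) =ᵐ[γ] fun x ↦ headGivenTail γ x A := by
  have hκ : Measurable fun x ↦ headGivenTail γ x A := Kernel.measurable_coe _ hA
  have hκshift : Measurable fun x ↦ headGivenTail γ (shift x) A := hκ.comp measurable_shift
  have inner_eq : ∫⁻ x, headGivenTail γ x A * headGivenTail γ (shift x) A ∂γ =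
      ∫⁻ x, headGivenTail γ x A * headGivenTail γ x A ∂γ := by
    rw [← hγ.lintegral_indicator_mul_comp_shift hA hκshift,
      hγ.lintegral_indicator_mul_comp_shift_shift hA hκ,
      hγ.lintegral_indicator_mul_comp_shift hA hκ]
  have norm_eq : ∫⁻ x, headGivenTail γ (shift x) A * headGivenTail γ (shift x) A ∂γ =
      ∫⁻ x, headGivenTail γ x A * headGivenTail γ x A ∂γ :=
    hγ.measurePreserving_shift.lintegral_comp (hκ.mul hκ)
  have norm_ne_top : ∫⁻ x, headGivenTail γ x A * headGivenTail γ x A ∂γ ≠ ∞ :=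
    (IsFiniteMeasure.lintegral_lt_top_of_bounded_to_ennreal γ
      ⟨1, fun x ↦ mul_le_one' prob_le_one prob_le_one⟩).ne
  exact (ae_eq_of_lintegral_mul_self_eq_lintegral_mul hκ.aemeasurable hκshift.aemeasurable
    (inner_eq ▸ norm_ne_top) inner_eq.symm (norm_eq.trans inner_eq.symm)).symm

theorem lintegral_prod_indicator_mul_eq (hγ : Exchangeable γ) {n : ℕ} {A : Fin n → Set X}
    (hA : ∀ i, MeasurableSet (A i)) (hh : Measurable h) (h_shift : h ∘ shift =ᵐ[γ] h) :
    ∫⁻ x, (∏ i, (A i).indicator 1 (x i.val)) * h x ∂γ =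
      ∫⁻ x, (∏ i, headGivenTail γ x (A i)) * h x ∂γ := by
  induction n generalizing h with
  | zero => simp
  | succ n ih =>
    let tailProd (x : ℕ → X) : ℝ≥0∞ := ∏ i : Fin n, (A i.succ).indicator 1 (x i.val)
    have h_tailProd : Measurable tailProd := Finset.measurable_fun_prod _ fun i _ ↦
      (measurable_one.indicator (hA i.succ)).comp (measurable_pi_apply i.val)
    have hκ : Measurable fun x ↦ headGivenTail γ x (A 0) := Kernel.measurable_coe _ (hA 0)
    calc ∫⁻ x, (∏ i, (A i).indicator 1 (x i.val)) * h x ∂γ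
        = ∫⁻ x, (A 0).indicator 1 (x 0) * (tailProd (shift x) * h (shift x)) ∂γ := by
          refine lintegral_congr_ae ?_
          filter_upwards [h_shift] with x hx
          rw [Fin.prod_univ_succ, mul_assoc, ← hx]
          rfl
      _ = ∫⁻ x, tailProd x * (headGivenTail γ x (A 0) * h x) ∂γ := by
          rw [hγ.lintegral_indicator_mul_comp_shift (h := fun x ↦ tailProd x * h x) (hA 0)
            (h_tailProd.mul hh)]
          simp only [mul_left_comm]
      _ = ∫⁻ x, (∏ i : Fin n, headGivenTail γ x (A i.succ)) *
            (headGivenTail γ x (A 0) * h x) ∂γ :=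
          ih (fun i ↦ hA i.succ) (hκ.mul hh)
            ((hγ.headGivenTail_comp_shift_ae_eq (hA 0)).mul h_shift)
      _ = ∫⁻ x, (∏ i, headGivenTail γ x (A i)) * h x ∂γ := by
          simp only [Fin.prod_univ_succ, mul_left_comm, mul_assoc]

theorem map_box_eq_lintegral_prod (hγ : Exchangeable γ) {n : ℕ} {A : Fin n → Set X}
    (hA : ∀ i, MeasurableSet (A i)) :
    γ.map (fun x (i : Fin n) ↦ x i.val) (Set.univ.pi A) =
      ∫⁻ x, ∏ i, headGivenTail γ x (A i) ∂γ := by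
  have indicator_box (y : Fin n → X) : (Set.univ.pi A).indicator 1 y =
      ∏ i, (A i).indicator (1 : X → ℝ≥0∞) (y i) := by
    rw [← Finset.coe_univ, Set.indicator_pi_one_apply]
  have measurable_indicator_prod : Measurable fun y : Fin n → X ↦
      ∏ i, (A i).indicator (1 : X → ℝ≥0∞) (y i) := Finset.measurable_fun_prod _ fun i _ ↦
    (measurable_one.indicator (hA i)).comp (measurable_pi_apply i)
  rw [← lintegral_indicator_one (.univ_pi hA), lintegral_congr indicator_box,
    lintegral_map measurable_indicator_prod (by fun_prop)]
  simpa using hγ.lintegral_prod_indicator_mul_eq hA measurable_one (ae_of_all _ fun _ ↦ rfl)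

end Exchangeable

theorem Exchangeable.exists_isMixingMeasure_isPowerMixture [StandardBorelSpace X]
    {γ : Measure (ℕ → X)} [IsProbabilityMeasure γ] (hγ : Exchangeable γ) :
    ∃ ν : Measure (Measure X), IsMixingMeasure ν ∧ IsPowerMixture γ ν := by
  have : Nonempty X := (nonempty_of_isProbabilityMeasure γ).map fun x ↦ x 0
  have hκ : Measurable (headGivenTail γ) := Kernel.measurable _
  have ae_prob : ∀ᵐ Q ∂(γ.map (headGivenTail γ)), IsProbabilityMeasure Q :=
    (ae_map_iff hκ.aemeasurable ProbabilityMeasure.measurableSet_isProbabilityMeasure).mpr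
      (ae_of_all _ fun _ ↦ inferInstance)
  refine ⟨γ.map (headGivenTail γ), ⟨Measure.isProbabilityMeasure_map hκ.aemeasurable, ae_prob⟩,
    isPowerMixture_of_forall_box ae_prob fun n A hA ↦ ?_⟩
  rw [hγ.map_box_eq_lintegral_prod hA, lintegral_map _ hκ]
  exact Finset.measurable_fun_prod _ fun i _ ↦ Measure.measurable_coe (hA i)

/-! ### Optimal transport with infinitely many marginals -/

/-- The infimum of `∫ c(x₀, x₁) dγ` over the exchangeable laws `γ` of sequences all of whose terms
have law `μ`. -/
def exchangeableTransportCost (c : X × X → ℝ≥0∞) (μ : Measure X) : ℝ≥0∞ :=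
  ⨅ (γ : Measure (ℕ → X)) (_ : IsProbabilityMeasure γ) (_ : Exchangeable γ)
    (_ : ∀ n, γ.map (fun x ↦ x n) = μ), ∫⁻ x, c (x 0, x 1) ∂γ

theorem exchangeableTransportCost_le {c : X × X → ℝ≥0∞} (hc : Measurable c) {μ : Measure X}
    {ν : Measure (Measure X)} (hν : IsMixingMeasure ν) (hμ : IsMixtureOf μ ν id)
    {μ₂ : Measure (X × X)} (hμ₂ : IsMixtureOf μ₂ ν fun Q ↦ Q.prod Q) :
    exchangeableTransportCost c μ ≤ ∫⁻ p, c p ∂μ₂ := by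
  obtain ⟨_, ae_prob⟩ := hν
  obtain ⟨γ, hγ⟩ := exists_isPowerMixture ae_prob
  have γ_prob := hγ.isProbabilityMeasure
  rw [← hγ.lintegral_pair_eq ae_prob hμ₂ hc]
  exact iInf₂_le_of_le γ γ_prob <| iInf₂_le (hγ.exchangeable ae_prob)
    fun n ↦ (hγ.map_eval ae_prob n).unique hμ

theorem FinfOT_eq_inf_over_deFinetti_mixtures_general [StandardBorelSpace X] {c : X × X → ℝ≥0∞}
    (hc : Measurable c) (μ : Measure X) :
    exchangeableTransportCost c μ =
      (⨅ (μ₂ : Measure (X × X)) (_ : ∃ ν : Measure (Measure X), IsMixingMeasure ν ∧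
          IsMixtureOf μ₂ ν (fun Q ↦ Q.prod Q) ∧ IsMixtureOf μ ν id), ∫⁻ p, c p ∂μ₂) ∧
    ∀ ν : Measure (Measure X), IsMixingMeasure ν → IsMixtureOf μ ν id →
      ∀ (γ : Measure (ℕ → X)) (μ₂ : Measure (X × X)),
        IsPowerMixture γ ν → IsMixtureOf μ₂ ν (fun Q ↦ Q.prod Q) →
        IsProbabilityMeasure γ ∧ Exchangeable γ ∧ (∀ n, γ.map (fun x ↦ x n) = μ) ∧
        (∫⁻ x, c (x 0, x 1) ∂γ = exchangeableTransportCost c μ ↔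
          ∫⁻ p, c p ∂μ₂ = exchangeableTransportCost c μ) := by
  refine ⟨le_antisymm ?_ ?_, ?_⟩
  · exact le_iInf₂ fun μ₂ ⟨ν, hν, hμ₂, hμ⟩ ↦ exchangeableTransportCost_le hc hν hμ hμ₂
  · refine le_iInf₂ fun γ _ ↦ le_iInf₂ fun γ_exch γ_marginal ↦ ?_
    obtain ⟨ν, hν, hγ⟩ := γ_exch.exists_isMixingMeasure_isPowerMixture
    have hμ : IsMixtureOf μ ν id := γ_marginal 0 ▸ hγ.map_eval hν.2 0
    have hμ₂ := hγ.map_pair hν.2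
    rw [hγ.lintegral_pair_eq hν.2 hμ₂ hc]
    exact iInf₂_le _ ⟨ν, hν, hμ₂, hμ⟩
  · rintro ν ⟨_, ae_prob⟩ hμ γ μ₂ hγ hμ₂
    have γ_prob := hγ.isProbabilityMeasure
    refine ⟨γ_prob, hγ.exchangeable ae_prob, fun n ↦ (hγ.map_eval ae_prob n).unique hμ, ?_⟩
    rw [hγ.lintegral_pair_eq ae_prob hμ₂ hc]

end

/-- Theorem 2.7 (reformulation via de Finetti):
`F_∞^OT[μ] = inf { ∫ c dμ₂ : μ₂ = ∫ Q⊗Q dν(Q), μ = ∫ Q dν(Q), ν ∈ P(P(ℝ^d)) }`,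
and `γ = ∫ Q^⊗∞ dν(Q)` minimizes the infinite-body problem iff
`μ₂ = ∫ Q⊗Q dν(Q)` attains that infimum. -/
theorem FinfOT_eq_inf_over_deFinetti_mixtures
    {d : ℕ} (c : Ed d → Ed d → ℝ≥0∞)
    (hmeas : Measurable fun p : Ed d × Ed d => c p.1 p.2)
    (hsymm : ∀ x y, c x y = c y x)
    (μ : Measure (Ed d)) [IsProbabilityMeasure μ] :
    FinfOT c μ =
      (⨅ (μ₂ : Measure (Ed d × Ed d))
        (_ : ∃ ν : Measure (Measure (Ed d)), IsProbOnProb ν ∧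
              IsMixtureOfSquares μ₂ ν ∧ IsMixture μ ν),
        ∫⁻ p, c p.1 p.2 ∂μ₂) ∧
    (∀ (ν : Measure (Measure (Ed d))), IsProbOnProb ν → IsMixture μ ν →
      ∀ (γ : Measure (ℕ → Ed d)) (μ₂ : Measure (Ed d × Ed d)),
        IsProbabilityMeasure γ → IsMixtureOfInfinitePowers γ ν → IsMixtureOfSquares μ₂ ν →
        (Cinf c γ = FinfOT c μ ↔ ∫⁻ p, c p.1 p.2 ∂μ₂ = FinfOT c μ)) := by
  obtain ⟨cost_eq, minimizer_iff⟩ := FinfOT_eq_inf_over_deFinetti_mixtures_general hmeas μ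
  exact ⟨cost_eq, fun ν hν hμ γ μ₂ _ hγ hμ₂ ↦ (minimizer_iff ν hν hμ γ μ₂ hγ hμ₂).2.2.2⟩
end
end
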